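/- arXiv:2502.14056 — 3 statements merged into one kernel-verified Lean document; each statement's English description precedes it below -/
import Mathlib

section
/- (Hunter's inequality) For all integers k ≥ 0, d ≥ 1 and every (x₁,…,x_d) ∈ ℝ^d, the complete homogeneous symmetric polynomial of even degree satisfies h_{2k}(x₁,…,x_d) ≥ (x₁² + … + x_d²)^k / (2^k · k!). -/
noncomputable section

/-- The content of the cell in row `i` and column `j` (0-indexed) is `j - i`. -/
def content (c : ℕ × ℕ) : ℤ := (c.2 : ℤ) - (c.1 : ℤ)

open scoped Classical in
/-- The complete homogeneous symmetric polynomial `h_r(x₁, …, x_d)` as a function of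
`x : Fin d → ℝ`: the sum of `x_{i₁} ⋯ x_{i_r}` over all `1 ≤ i₁ ≤ … ≤ i_r ≤ d`,
i.e. over all monotone maps `Fin r → Fin d`. -/
def hsym (d r : ℕ) (x : Fin d → ℝ) : ℝ :=
  ∑ f ∈ Finset.univ.filter (fun f : Fin r → Fin d => Monotone f), ∏ i, x (f i)

/-- `h_r(λ)`: the evaluation of the complete homogeneous symmetric polynomial of degree `r`
at the multiset of contents of the Young diagram `λ` (independent of the enumeration of
the cells, `h_r` being symmetric). -/
def hYoung (r : ℕ) (lam : YoungDiagram) : ℝ :=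
  hsym lam.cells.card r (fun i => (content (lam.cells.equivFin.symm i) : ℝ))

open PowerSeries in
/-- geometric series -/
def gser (a : ℝ) : PowerSeries ℝ := PowerSeries.mk (fun n => a ^ n)

/-- complete homogeneous on multisets -/
def HH (r : ℕ) (s : Multiset ℝ) : ℝ := PowerSeries.coeff r (s.map gser).prod

lemma gser_mul (a : ℝ) : gser a * (1 - PowerSeries.C a * PowerSeries.X) = 1 := by
  ext n
  cases n with
  | zero => simp [gser, mul_sub]
  | succ n =>
    rw [mul_sub, ← mul_assoc, map_sub, PowerSeries.coeff_succ_mul_X, mul_comm (gser a) (PowerSeries.C a),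
      PowerSeries.coeff_C_mul]
    simp [gser, PowerSeries.coeff_one, pow_succ]
    ring

lemma gser_sub (a b : ℝ) :
    gser a - gser b = PowerSeries.C (a - b) * (gser a * gser b) * PowerSeries.X := by
  have ha := gser_mul a
  have hb := gser_mul b
  rw [map_sub]
  linear_combination (-gser a) * hb + gser b * ha

lemma HH_sub (r : ℕ) (a b : ℝ) (s : Multiset ℝ) :
    HH (r+1) (a ::ₘ s) - HH (r+1) (b ::ₘ s) = (a - b) * HH r (a ::ₘ b ::ₘ s) := by
  unfold HH
  simp only [Multiset.map_cons, Multiset.prod_cons]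
  rw [← map_sub, ← sub_mul, gser_sub, ← PowerSeries.coeff_C_mul,
    ← PowerSeries.coeff_succ_mul_X r]
  congr 1
  ring

lemma HH_cont (r : ℕ) (s : Multiset ℝ) : Continuous (fun t => HH r (t ::ₘ s)) := by
  unfold HH
  simp only [Multiset.map_cons, Multiset.prod_cons, PowerSeries.coeff_mul, gser, PowerSeries.coeff_mk]
  fun_prop

lemma HH_deriv (r : ℕ) (a : ℝ) (s : Multiset ℝ) :
    HasDerivAt (fun t => HH (r+1) (t ::ₘ s)) (HH r (a ::ₘ a ::ₘ s)) a := by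
  rw [hasDerivAt_iff_tendsto_slope]
  have h := (HH_cont r (a ::ₘ s)).tendsto a
  refine (h.mono_left nhdsWithin_le_nhds).congr' ?_
  filter_upwards [self_mem_nhdsWithin] with t ht
  have ht' : t - a ≠ 0 := sub_ne_zero.mpr ht
  rw [slope_def_field, HH_sub]
  field_simp

lemma HH_const (d r : ℕ) (t : ℝ) :
    HH r (Multiset.replicate (d+1) t) = (Nat.choose (d + r) d : ℝ) * t ^ r := by
  have h : gser t = PowerSeries.rescale t (PowerSeries.mk 1) := by
    ext n; simp [gser, PowerSeries.coeff_rescale]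
  unfold HH
  rw [Multiset.map_replicate, Multiset.prod_replicate, h, ← map_pow,
    PowerSeries.mk_one_pow_eq_mk_choose_add, PowerSeries.coeff_rescale]
  simp [mul_comm]

lemma choose_bound (d k : ℕ) :
    ((d+1 : ℕ) : ℝ) ^ k / (2 ^ k * Nat.factorial k) ≤ (Nat.choose (d + 2 * k) d : ℝ) := by
  induction k with
  | zero => simp
  | succ k ih =>
    have h1 : (Nat.choose (d + 2 * k + 2) d) * ((2 * k + 1) * (2 * k + 2))
        = Nat.choose (d + 2 * k) d * ((d + 2 * k + 1) * (d + 2 * k + 2)) := by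
      have e1 := Nat.choose_mul_succ_eq (d + 2 * k) d
      have e2 := Nat.choose_mul_succ_eq (d + 2 * k + 1) d
      rw [show d + 2 * k + 1 - d = 2 * k + 1 by omega] at e1
      rw [show d + 2 * k + 1 + 1 - d = 2 * k + 2 by omega] at e2
      rw [show d + 2 * k + 2 = d + 2 * k + 1 + 1 by ring]
      calc _ = (d + 2 * k + 1 + 1).choose d * (2 * k + 2) * (2 * k + 1) := by ring
        _ = (d + 2 * k).choose d * (d + 2 * k + 1) * (d + 2 * k + 1 + 1) := by rw [← e2, e1]; ring
        _ = _ := by ring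
    have h1' : (Nat.choose (d + 2 * k + 2) d : ℝ) * ((2 * k + 1) * (2 * k + 2))
        = Nat.choose (d + 2 * k) d * ((d + 2 * k + 1) * (d + 2 * k + 2)) := by exact_mod_cast h1
    rw [show d + 2 * (k + 1) = d + 2 * k + 2 by ring]
    have hp : (0:ℝ) < (2 * k + 1) * (2 * k + 2) := by positivity
    refine le_of_mul_le_mul_right ?_ hp
    rw [h1']
    have e : ((d+1 : ℕ) : ℝ) ^ (k+1) / (2 ^ (k+1) * Nat.factorial (k+1)) * ((2 * k + 1) * (2 * k + 2))
       = ((d+1 : ℕ) : ℝ) ^ k / (2 ^ k * Nat.factorial k) * ((d+1) * (2 * k + 1)) := by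
      rw [Nat.factorial_succ]; push_cast; field_simp; ring
    rw [e]
    gcongr ?_ * ?_
    have : (0:ℝ) ≤ d := by positivity
    have : (0:ℝ) ≤ k := by positivity
    nlinarith [mul_nonneg ‹(0:ℝ) ≤ d› ‹(0:ℝ) ≤ k›, mul_nonneg ‹(0:ℝ) ≤ d› ‹(0:ℝ) ≤ d›]

/-- functional version -/
def HF (d r : ℕ) (x : Fin d → ℝ) : ℝ := HH r (Finset.univ.val.map x)

lemma HF_zero_right (d : ℕ) (x : Fin d → ℝ) : HF d 0 x = 1 := by
  unfold HF HH
  rw [Multiset.map_map]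
  change PowerSeries.coeff 0 (∏ i, gser (x i)) = 1
  rw [PowerSeries.coeff_zero_eq_constantCoeff_apply, map_prod]
  simp [gser, ← PowerSeries.coeff_zero_eq_constantCoeff_apply]

lemma HF_rec (d r : ℕ) (x : Fin (d+1) → ℝ) :
    HF (d+1) (r+1) x = HF d (r+1) (fun i => x i.succ) + x 0 * HF (d+1) r x := by
  have key : ∀ (d : ℕ) (r : ℕ) (x : Fin d → ℝ), HF d r x = PowerSeries.coeff r (∏ i, gser (x i)) := by
    intro d r x
    unfold HF HH; rw [Multiset.map_map]; rfl
  rw [key, key, key, Fin.prod_univ_succ, ← PowerSeries.coeff_C_mul, ← PowerSeries.coeff_succ_mul_X r,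
    ← map_add]
  congr 1
  linear_combination (∏ i : Fin d, gser (x i.succ)) * gser_mul (x 0)

lemma hsym_zero_right (d : ℕ) (x : Fin d → ℝ) : hsym d 0 x = 1 := by
  unfold hsym
  rw [Finset.filter_true_of_mem]
  · simp
  · intro f _ i; exact i.elim0

lemma hsym_rec (d r : ℕ) (x : Fin (d+1) → ℝ) :
    hsym (d+1) (r+1) x = hsym d (r+1) (fun i => x i.succ) + x 0 * hsym (d+1) r x := by
  classical
  unfold hsym
  rw [← Finset.sum_filter_add_sum_filter_not _ (fun f : Fin (r+1) → Fin (d+1) => f 0 = 0), add_comm]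
  congr 1
  · symm
    refine Finset.sum_bij (fun g _ => fun i => (g i).succ) ?_ ?_ ?_ ?_
    · intro g hg
      simp only [Finset.mem_filter, Finset.mem_univ, true_and] at hg ⊢
      exact ⟨fun a b h => Fin.succ_le_succ_iff.mpr (hg h), Fin.succ_ne_zero _⟩
    · intro g _ g' _ h
      funext i
      exact Fin.succ_injective _ (congrFun h i)
    · intro f hf
      simp only [Finset.mem_filter, Finset.mem_univ, true_and] at hf
      have hne : ∀ i, f i ≠ 0 := fun i h0 => hf.2 (le_antisymm (h0 ▸ hf.1 (Fin.zero_le i)) (Fin.zero_le _))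
      refine ⟨fun i => (f i).pred (hne i), ?_, ?_⟩
      · simp only [Finset.mem_filter, Finset.mem_univ, true_and]
        intro a b h
        exact Fin.pred_le_pred_iff.mpr (hf.1 h)
      · funext i; simp
    · intro g _; rfl
  · rw [Finset.mul_sum]
    symm
    refine Finset.sum_bij (fun g _ => Fin.cons 0 g) ?_ ?_ ?_ ?_
    · intro g hg
      simp only [Finset.mem_filter, Finset.mem_univ, true_and] at hg ⊢
      refine ⟨?_, by simp⟩
      intro a b h
      induction a using Fin.cases with
      | zero => simp
      | succ a =>
        induction b using Fin.cases with
        | zero => exact absurd h (by simp)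
        | succ b => simpa using hg (Fin.succ_le_succ_iff.mp h)
    · intro g _ g' _ h
      funext i
      simpa using congrFun h i.succ
    · intro f hf
      simp only [Finset.mem_filter, Finset.mem_univ, true_and] at hf
      refine ⟨fun i => f i.succ, ?_, ?_⟩
      · simp only [Finset.mem_filter, Finset.mem_univ, true_and]
        intro a b h
        exact hf.1 (Fin.succ_le_succ_iff.mpr h)
      · funext i
        induction i using Fin.cases with
        | zero => simp [hf.2]
        | succ i => simp
    · intro g _
      rw [Fin.prod_univ_succ]; simp

lemma hsym_eq_HF (d r : ℕ) (x : Fin d → ℝ) : hsym d r x = HF d r x := by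
  induction d generalizing r with
  | zero =>
    cases r with
    | zero => rw [hsym_zero_right, HF_zero_right]
    | succ r =>
      have h1 : hsym 0 (r+1) x = 0 := by
        unfold hsym
        apply Finset.sum_eq_zero
        intro f _
        exact (f 0).elim0
      have h2 : HF 0 (r+1) x = 0 := by
        simp [HF, HH, PowerSeries.coeff_one]
      rw [h1, h2]
  | succ d ihd =>
    induction r with
    | zero => rw [hsym_zero_right, HF_zero_right]
    | succ r ih => rw [hsym_rec, HF_rec, ihd, ih]

lemma hsym_continuous (d r : ℕ) : Continuous (hsym d r) := by
  unfold hsym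
  fun_prop

lemma hsym_smul (d r : ℕ) (c : ℝ) (x : Fin d → ℝ) :
    hsym d r (fun i => c * x i) = c ^ r * hsym d r x := by
  unfold hsym
  rw [Finset.mul_sum]
  refine Finset.sum_congr rfl fun f _ => ?_
  rw [Finset.prod_mul_distrib]; simp

lemma univ_map_eq {d : ℕ} (x : Fin d → ℝ) (i : Fin d) :
    (Finset.univ.val.map x) = x i ::ₘ ((Finset.univ.erase i).val.map x) := by
  rw [← Multiset.map_cons, ← Finset.insert_val_of_notMem (Finset.notMem_erase i _),
    Finset.insert_erase (Finset.mem_univ i)]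

lemma univ_map_eq2 {d : ℕ} (x : Fin d → ℝ) (i j : Fin d) (hij : i ≠ j) :
    ((Finset.univ.erase i).val.map x) = x j ::ₘ (((Finset.univ.erase i).erase j).val.map x) := by
  rw [← Multiset.map_cons, ← Finset.insert_val_of_notMem (Finset.notMem_erase j _),
    Finset.insert_erase (by simp [hij.symm])]

lemma update_map {d : ℕ} (x : Fin d → ℝ) (i : Fin d) (t : ℝ) :
    (Finset.univ.val.map (Function.update x i t)) = t ::ₘ ((Finset.univ.erase i).val.map x) := by
  rw [univ_map_eq _ i, Function.update_self]
  congr 1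
  refine Multiset.map_congr rfl fun j hj => ?_
  have : j ≠ i := Finset.ne_of_mem_erase (s := Finset.univ) hj
  simp [this]

/-- the inequality on multisets, degree `2k` -/
def HIneq (k : ℕ) : Prop := ∀ s : Multiset ℝ,
  ((s.map (fun a => a ^ 2)).sum) ^ k / (2 ^ k * Nat.factorial k) ≤ HH (2 * k) s

lemma crit (k d : ℕ) (hk : HIneq k) (x : Fin (d+1) → ℝ) (hx : ∑ i, x i ^ 2 = 1)
    (hmin : ∀ y : Fin (d+1) → ℝ,
      HF (d+1) (2*k+2) x * (∑ i, y i ^ 2) ^ (k+1) ≤ HF (d+1) (2*k+2) y) :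
    1 / (2 ^ (k+1) * Nat.factorial (k+1)) ≤ HF (d+1) (2*k+2) x := by
  set c := HF (d+1) (2*k+2) x with hc
  have hD : ∀ i, HH (2*k+1) (x i ::ₘ Finset.univ.val.map x) = 2 * (k+1) * c * x i := by
    intro i
    set R := (Finset.univ.erase i).val.map x with hR
    set S := ∑ j ∈ Finset.univ.erase i, x j ^ 2 with hS
    have hxS : x i ^ 2 + S = 1 := by
      rw [← hx, hS, Finset.add_sum_erase _ (fun j => x j ^ 2) (Finset.mem_univ i)]
    have h1 : HasDerivAt (fun t : ℝ => HH (2*k+1+1) (t ::ₘ R) - c * (t ^ 2 + S) ^ (k+1))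
        (HH (2*k+1) (x i ::ₘ x i ::ₘ R) - c * (((k+1 : ℕ) : ℝ) * (x i ^ 2 + S) ^ k * (2 * x i))) (x i) := by
      refine (HH_deriv (2*k+1) (x i) R).sub (HasDerivAt.const_mul c ?_)
      have := ((hasDerivAt_pow 2 (x i)).add_const S).pow (k+1)
      simp only [Nat.add_sub_cancel, Nat.cast_ofNat, pow_one, Nat.add_one_sub_one] at this
      exact this
    have h2 : IsLocalMin (fun t : ℝ => HH (2*k+1+1) (t ::ₘ R) - c * (t ^ 2 + S) ^ (k+1)) (x i) := by
      refine Filter.Eventually.of_forall fun t => ?_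
      have e1 : HH (2*k+1+1) (x i ::ₘ R) = c := by rw [hc, HF, univ_map_eq x i]
      have e2 := hmin (Function.update x i t)
      rw [HF, update_map, ← Finset.add_sum_erase _ _ (Finset.mem_univ i), Function.update_self] at e2
      have e3 : ∑ j ∈ Finset.univ.erase i, (Function.update x i t) j ^ 2 = S := by
        refine Finset.sum_congr rfl fun j hj => ?_
        rw [Function.update_of_ne (Finset.ne_of_mem_erase hj)]
      rw [e3] at e2
      simp only [e1, hxS, one_pow, mul_one, sub_self]
      exact sub_nonneg.mpr e2
    have h3 := h2.hasDerivAt_eq_zero h1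
    rw [hxS, one_pow] at h3
    rw [univ_map_eq x i]
    push_cast at h3
    linarith
  by_cases hall : ∀ i, x i = x 0
  · have hm : Finset.univ.val.map x = Multiset.replicate (d+1) (x 0) := by
      rw [Multiset.map_congr rfl (fun i _ => hall i)]
      simp
    have hq : ((d+1 : ℕ) : ℝ) * x 0 ^ 2 = 1 := by
      rw [← hx, Finset.sum_congr rfl (fun i _ => by rw [hall i])]
      simp
    rw [hc, HF, hm, HH_const, show 2*k+2 = 2*(k+1) by ring]
    calc _ = (((d+1 : ℕ) : ℝ) ^ (k+1) / (2 ^ (k+1) * Nat.factorial (k+1))) * x 0 ^ (2*(k+1)) := by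
            rw [pow_mul, div_mul_eq_mul_div, ← mul_pow, hq, one_pow]
      _ ≤ _ := by
        have : 0 ≤ x 0 ^ (2*(k+1)) := by rw [pow_mul]; positivity
        exact mul_le_mul_of_nonneg_right (choose_bound d (k+1)) this
  · push Not at hall
    obtain ⟨i, hi⟩ := hall
    have hi0 : i ≠ 0 := fun h => hi (by rw [h])
    have e1 := hD i
    have e2 := hD 0
    have e3 := HH_sub (2*k) (x i) (x 0) (Finset.univ.val.map x)
    rw [e1, e2] at e3
    have e4 : 2 * (k+1) * c = HH (2*k) (x i ::ₘ x 0 ::ₘ Finset.univ.val.map x) := by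
      apply mul_left_cancel₀ (sub_ne_zero.mpr hi)
      linarith
    have e5 := hk (x i ::ₘ x 0 ::ₘ Finset.univ.val.map x)
    rw [← e4] at e5
    simp only [Multiset.map_cons, Multiset.sum_cons, Multiset.map_map, Function.comp_def] at e5
    have e6 : (Multiset.map (fun i => x i ^ 2) Finset.univ.val).sum = 1 := hx
    rw [e6] at e5
    have e7 : (1:ℝ) ≤ (x i ^ 2 + (x 0 ^ 2 + 1)) ^ k := one_le_pow₀ (by nlinarith [sq_nonneg (x i), sq_nonneg (x 0)])
    have e8 : 1 / (2 ^ k * (Nat.factorial k : ℝ)) ≤ 2 * (k+1) * c := le_trans (by gcongr) e5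
    rw [Nat.factorial_succ]
    push_cast
    rw [div_le_iff₀ (by positivity)] at e8 ⊢
    calc (1:ℝ) ≤ _ := e8
      _ = _ := by ring

lemma HIneq_all (k : ℕ) : HIneq k := by
  induction k with
  | zero =>
    intro s
    have : HH 0 s = 1 := by
      unfold HH
      rw [PowerSeries.coeff_zero_eq_constantCoeff_apply, map_multiset_prod, Multiset.map_map]
      apply Multiset.prod_eq_one
      intro y hy
      obtain ⟨a, _, rfl⟩ := Multiset.mem_map.mp hy
      simp [gser, ← PowerSeries.coeff_zero_eq_constantCoeff_apply]
    simp [this]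
  | succ k ih =>
    intro s
    obtain ⟨d, x, rfl⟩ : ∃ (d : ℕ) (x : Fin d → ℝ), s = Finset.univ.val.map x := by
      induction s using Quotient.inductionOn with
      | _ l => exact ⟨l.length, l.get, by simp⟩
    change _ ≤ HF d (2 * (k+1)) x
    rw [Multiset.map_map]
    change (∑ i, x i ^ 2) ^ (k+1) / _ ≤ _
    rcases d with _ | d
    · simp [← hsym_eq_HF, hsym]
    obtain ⟨z, hz, hzm⟩ : ∃ z ∈ {z : Fin (d+1) → ℝ | ∑ i, z i ^ 2 = 1},
        IsMinOn (hsym (d+1) (2*k+2)) {z : Fin (d+1) → ℝ | ∑ i, z i ^ 2 = 1} z := by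
      refine IsCompact.exists_isMinOn ?_ ?_ (hsym_continuous _ _).continuousOn
      · refine Metric.isCompact_of_isClosed_isBounded ?_ ?_
        · exact isClosed_eq (by fun_prop) continuous_const
        · refine (Metric.isBounded_closedBall (x := (0 : Fin (d+1) → ℝ)) (r := 1)).subset ?_
          intro z hz
          rw [mem_closedBall_zero_iff, pi_norm_le_iff_of_nonneg zero_le_one]
          intro i
          rw [Real.norm_eq_abs, ← sq_le_one_iff_abs_le_one]
          rw [← (show ∑ i, z i ^ 2 = 1 from hz)]
          exact Finset.single_le_sum (f := fun i => z i ^ 2) (fun j _ => sq_nonneg _) (Finset.mem_univ i)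
      · exact ⟨Pi.single 0 1, by simp [Fin.sum_univ_succ]⟩
    have hmin : ∀ y : Fin (d+1) → ℝ,
        HF (d+1) (2*k+2) z * (∑ i, y i ^ 2) ^ (k+1) ≤ HF (d+1) (2*k+2) y := by
      intro y
      rw [← hsym_eq_HF, ← hsym_eq_HF]
      set Q := ∑ i, y i ^ 2 with hQ
      have hQ0 : 0 ≤ Q := Finset.sum_nonneg fun i _ => sq_nonneg _
      rcases hQ0.eq_or_lt with h0 | hpos
      · have hy : ∀ i, y i = 0 := by
          intro i
          have := (Finset.sum_eq_zero_iff_of_nonneg (fun i _ => sq_nonneg (y i))).mp h0.symm i (Finset.mem_univ i)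
          exact pow_eq_zero_iff (two_ne_zero) |>.mp this
        have := hsym_smul (d+1) (2*k+2) 0 y
        have e : (fun i => 0 * y i) = y := by funext i; simp [hy i]
        rw [e] at this
        rw [this, ← h0]; simp
      · have hs : Real.sqrt Q ≠ 0 := (Real.sqrt_pos.mpr hpos).ne'
        have hs2 : Real.sqrt Q ^ 2 = Q := Real.sq_sqrt hQ0
        have e : (fun i => Real.sqrt Q * ((Real.sqrt Q)⁻¹ * y i)) = y := by
          funext i; field_simp
        have h1 := hsym_smul (d+1) (2*k+2) (Real.sqrt Q) (fun i => (Real.sqrt Q)⁻¹ * y i)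
        rw [e, show 2*k+2 = 2*(k+1) by ring, pow_mul, hs2] at h1
        rw [show 2*k+2 = 2*(k+1) by ring, h1, mul_comm]
        refine mul_le_mul_of_nonneg_left ?_ (by positivity)
        refine hzm ?_
        simp only [Set.mem_ofPred_eq, mul_pow, ← Finset.mul_sum, inv_pow, hs2]
        rw [← hQ]; field_simp
    have hc := crit k d ih z hz hmin
    have := hmin x
    refine le_trans ?_ this
    rw [div_eq_mul_one_div, mul_comm]
    refine mul_le_mul_of_nonneg_right hc ?_
    exact pow_nonneg (Finset.sum_nonneg fun i _ => sq_nonneg _) _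

/-- Hunter's inequality: for every `k ≥ 0`, `d ≥ 1` and `(x₁,…,x_d) ∈ ℝ^d`,
`h_{2k}(x₁,…,x_d) ≥ (x₁² + … + x_d²)^k / (2^k k!)`. -/
theorem hunter_inequality (k d : ℕ) (hd : 1 ≤ d) (x : Fin d → ℝ) :
    (∑ i, x i ^ 2) ^ k / (2 ^ k * Nat.factorial k) ≤ hsym d (2 * k) x := by
  have h := HIneq_all k (Finset.univ.val.map x)
  rw [Multiset.map_map] at h
  rw [hsym_eq_HF]
  exact h
end
end

section
/- For all integers g ≥ 1 and d ≥ 1, H_g^d = d! · Σ_{λ ∈ Y^d} h_{2g−2}(λ) equals the number of tuples (π₁, π₂, τ₁, …, τ_{2g−2}) of permutations of {1,…,d} such that: (1) π₁π₂π₁⁻¹π₂⁻¹τ₁⋯τ_{2g−2} is the identity permutation; (2) each τ_i is a transposition; (3) writing τ_i = (s_i t_i) with 1 ≤ s_i < t_i ≤ d, one has t₁ ≤ … ≤ t_{2g−2}. -/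
noncomputable section

/-- `H_g^d = d! · Σ_{λ ∈ Y^d} h_{2g−2}(λ)`, the sum running over all Young diagrams with
exactly `d` cells. -/
def Hgd (g d : ℕ) : ℝ :=
  (Nat.factorial d) * ∑' lam : {lam : YoungDiagram // lam.card = d}, hYoung (2 * g - 2) lam.1


open Matrix in
lemma vand_update {n : ℕ} (w : Fin n → ℝ) (k : Fin n) (y : ℝ) :
    vandermonde (Function.update w k y) = updateRow (vandermonde w) k (fun p => y ^ (p : ℕ)) := by
  ext i p
  by_cases h : i = k
  · subst h; simp [vandermonde_apply]
  · simp [vandermonde_apply, updateRow_ne h, Function.update_of_ne h]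

open Matrix in
lemma vand_interp {h : ℕ} (u : Fin h → ℝ) (hu : Function.Injective u) (y : ℝ) :
    ∃ l : Fin h → ℝ, ∀ p : ℕ, p < h → y ^ p = ∑ j, l j * u j ^ p := by
  have hdet : IsUnit (vandermonde u).det := (det_vandermonde_ne_zero_iff.2 hu).isUnit
  refine ⟨(fun p : Fin h => y ^ (p : ℕ)) ᵥ* (vandermonde u)⁻¹, fun p hp => ?_⟩
  have h1 : ((fun p : Fin h => y ^ (p : ℕ)) ᵥ* (vandermonde u)⁻¹) ᵥ* vandermonde u
      = (fun p : Fin h => y ^ (p : ℕ)) := by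
    rw [vecMul_vecMul, nonsing_inv_mul _ hdet, vecMul_one]
  have h2 := congrFun h1 ⟨p, hp⟩
  simp only [vecMul, dotProduct, vandermonde_apply] at h2 ⊢
  exact h2.symm

open Matrix in
lemma garnir {h n : ℕ} (hn : n ≤ h) (u : Fin h → ℝ) (hu : Function.Injective u)
    (w : Fin n → ℝ) (k : Fin n) :
    ∑ j, (vandermonde (Function.update u j (w k))).det
      * (vandermonde (Function.update w k (u j))).det
      = (vandermonde u).det * (vandermonde w).det := by
  obtain ⟨l, hl⟩ := vand_interp u hu (w k)
  have h1 : ∀ j, (vandermonde (Function.update u j (w k))).det = l j * (vandermonde u).det := by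
    intro j
    rw [vand_update]
    have : (fun p : Fin h => w k ^ (p : ℕ)) = ∑ i, l i • (vandermonde u) i := by
      ext p
      simp [hl p p.2, vandermonde_apply]
    rw [this, det_updateRow_sum, smul_eq_mul]
  have h2 : (vandermonde w).det = ∑ j, l j * (vandermonde (Function.update w k (u j))).det := by
    have e : (vandermonde w) = updateRow (vandermonde w) k (∑ j, l j • fun p : Fin n => u j ^ (p : ℕ)) := by
      have : (∑ j, l j • fun p : Fin n => u j ^ (p : ℕ)) = fun p : Fin n => w k ^ (p : ℕ) := by
        ext p
        simp [hl p (p.2.trans_le hn)]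
      rw [this, ← vand_update, Function.update_eq_self]
    rw [e]
    have := map_sum ((detRowAlternating (R := ℝ) (n := Fin n)).toMultilinearMap.toLinearMap (vandermonde w) k)
      (fun j => l j • fun p : Fin n => u j ^ (p : ℕ)) Finset.univ
    simp only [map_smul, smul_eq_mul] at this
    refine Eq.trans this ?_
    refine Finset.sum_congr rfl fun j _ => ?_
    rw [vand_update]
    rfl
  rw [h2, Finset.mul_sum]
  refine Finset.sum_congr rfl fun j _ => ?_
  rw [h1]; ring

/-- Determinant of a column. -/
def colDet (lam : YoungDiagram) (x : ℕ × ℕ → ℝ) (c : ℕ) : ℝ :=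
  (Matrix.vandermonde (fun r : Fin (lam.colLen c) => x (r, c))).det

/-- The Specht polynomial. -/
def specht (lam : YoungDiagram) (x : ℕ × ℕ → ℝ) : ℝ :=
  ∏ c ∈ Finset.range (lam.rowLen 0), colDet lam x c

lemma colDet_swap_of_ne (lam : YoungDiagram) (x : ℕ × ℕ → ℝ) (c : ℕ) (p q : ℕ × ℕ)
    (hp : p.2 ≠ c) (hq : q.2 ≠ c) : colDet lam (x ∘ Equiv.swap p q) c = colDet lam x c := by
  unfold colDet
  congr 2
  ext r
  simp only [Function.comp]
  rw [Equiv.swap_apply_of_ne_of_ne]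
  · rintro rfl; exact hp rfl
  · rintro rfl; exact hq rfl

lemma colDet_swap_left (lam : YoungDiagram) (x : ℕ × ℕ → ℝ) (c : ℕ) (r : Fin (lam.colLen c))
    (q : ℕ × ℕ) (hq : q.2 ≠ c) : colDet lam (x ∘ Equiv.swap ((r : ℕ), c) q) c =
      (Matrix.vandermonde (Function.update (fun r : Fin (lam.colLen c) => x (r, c)) r (x q))).det := by
  unfold colDet
  congr 2
  ext r'
  by_cases h : r' = r
  · subst h; simp
  · rw [Function.update_of_ne h]
    simp only [Function.comp]
    rw [Equiv.swap_apply_of_ne_of_ne]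
    · intro h'; apply h; ext; simpa using h'
    · rintro rfl; exact hq rfl

lemma colDet_swap_same (lam : YoungDiagram) (x : ℕ × ℕ → ℝ) (c : ℕ) (r s : Fin (lam.colLen c))
    (hrs : r ≠ s) : colDet lam (x ∘ Equiv.swap ((r : ℕ), c) ((s : ℕ), c)) c = - colDet lam x c := by
  unfold colDet
  have : (Matrix.vandermonde (fun r' : Fin (lam.colLen c) =>
      (x ∘ Equiv.swap ((r : ℕ), c) ((s : ℕ), c)) (r', c)))
      = (Matrix.vandermonde (fun r : Fin (lam.colLen c) => x (r, c))).submatrix (Equiv.swap r s) id := by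
    ext i j
    simp only [Matrix.vandermonde_apply, Matrix.submatrix_apply, Function.comp, id]
    congr 2
    have : ∀ t : Fin (lam.colLen c), ((t : ℕ), c) = (fun t : Fin (lam.colLen c) => ((t : ℕ), c)) t := fun _ => rfl
    have inj : Function.Injective (fun t : Fin (lam.colLen c) => ((t : ℕ), c)) := by
      intro a b h; ext; simpa using h
    rw [this r, this s, this i, inj.swap_apply]
  rw [this, Matrix.det_permute, Equiv.Perm.sign_swap hrs]
  simp

lemma colLen_pos_iff (lam : YoungDiagram) {r c : ℕ} (h : (r, c) ∈ lam) : c < lam.rowLen 0 :=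
  YoungDiagram.mem_iff_lt_rowLen.1 (lam.up_left_mem (Nat.zero_le r) le_rfl h)

lemma specht_same (lam : YoungDiagram) (x : ℕ × ℕ → ℝ) {r s c : ℕ} (hr : (r, c) ∈ lam)
    (hs : (s, c) ∈ lam) (hrs : r ≠ s) :
    specht lam (x ∘ Equiv.swap (r, c) (s, c)) = - specht lam x := by
  have hc : c ∈ Finset.range (lam.rowLen 0) := Finset.mem_range.2 (colLen_pos_iff lam hr)
  unfold specht
  rw [← Finset.mul_prod_erase _ _ hc, ← Finset.mul_prod_erase _ _ hc]
  rw [YoungDiagram.mem_iff_lt_colLen] at hr hs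
  rw [colDet_swap_same lam x c ⟨r, hr⟩ ⟨s, hs⟩ (by simpa using hrs), neg_mul]
  congr 2
  refine Finset.prod_congr rfl fun c' hc' => ?_
  have := Finset.ne_of_mem_erase hc'
  exact colDet_swap_of_ne _ _ _ _ _ (fun h => this h.symm) (fun h => this h.symm)

lemma specht_col (lam : YoungDiagram) (x : ℕ × ℕ → ℝ) (hx : Set.InjOn x lam.cells) {r c c' : ℕ}
    (hr : (r, c) ∈ lam) (hc' : c' < c) :
    ∑ r' ∈ Finset.range (lam.colLen c'), specht lam (x ∘ Equiv.swap (r', c') (r, c))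
      = specht lam x := by
  have hc : c ∈ Finset.range (lam.rowLen 0) := Finset.mem_range.2 (colLen_pos_iff lam hr)
  have hcc : c' ∈ (Finset.range (lam.rowLen 0)).erase c :=
    Finset.mem_erase.2 ⟨hc'.ne, Finset.mem_range.2 (hc'.trans (Finset.mem_range.1 hc))⟩
  unfold specht
  simp only [← Finset.mul_prod_erase _ _ hc, ← Finset.mul_prod_erase _ _ hcc]
  have h0 : ∀ r', ∏ t ∈ ((Finset.range (lam.rowLen 0)).erase c).erase c',
      colDet lam (x ∘ Equiv.swap (r', c') (r, c)) t
      = ∏ t ∈ ((Finset.range (lam.rowLen 0)).erase c).erase c', colDet lam x t := by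
    intro r'
    refine Finset.prod_congr rfl fun t ht => ?_
    simp only [Finset.mem_erase] at ht
    exact colDet_swap_of_ne _ _ _ _ _ (fun h => ht.1 h.symm) (fun h => ht.2.1 h.symm)
  simp only [h0, ← mul_assoc]
  rw [← Finset.sum_mul, Finset.sum_range]
  congr 1
  rw [YoungDiagram.mem_iff_lt_colLen] at hr
  have key := garnir (lam.colLen_anti c' c hc'.le) (fun r : Fin (lam.colLen c') => x (r, c'))
    (by
      intro a b hab
      have := hx (show ((a : ℕ), c') ∈ (lam.cells : Set _) from YoungDiagram.mem_iff_lt_colLen.2 a.2)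
        (show ((b : ℕ), c') ∈ (lam.cells : Set _) from YoungDiagram.mem_iff_lt_colLen.2 b.2) hab
      ext; simpa using this) (fun r : Fin (lam.colLen c) => x (r, c)) ⟨r, hr⟩
  refine Eq.trans ?_ (key.trans (mul_comm _ _))
  refine Finset.sum_congr rfl fun j _ => ?_
  rw [mul_comm, colDet_swap_left lam x c' j (r, c) hc'.ne', Equiv.swap_comm]
  congr 1
  have hne := hc'.ne
  exact colDet_swap_left lam x c ⟨r, hr⟩ (j, c') hne

/-- The cells before `(r, c)` in column order. -/
def before (lam : YoungDiagram) (r c : ℕ) : Finset (ℕ × ℕ) :=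
  lam.cells.filter (fun p => p.2 < c ∨ p.2 = c ∧ p.1 < r)

lemma specht_eigen (lam : YoungDiagram) (x : ℕ × ℕ → ℝ) (hx : Set.InjOn x lam.cells) {r c : ℕ}
    (hr : (r, c) ∈ lam) :
    ∑ p ∈ before lam r c, specht lam (x ∘ Equiv.swap p (r, c))
      = ((c : ℝ) - r) * specht lam x := by
  have hb : before lam r c = ((Finset.range c).sigma (fun c' => Finset.range (lam.colLen c'))).image
      (fun s => (s.2, s.1)) ∪ (Finset.range r).image (fun r' => (r', c)) := by
    ext ⟨a, b⟩
    simp only [before, Finset.mem_filter, YoungDiagram.mem_cells, Finset.mem_union, Finset.mem_image,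
      Finset.mem_sigma, Finset.mem_range, Prod.mk.injEq, Sigma.exists]
    constructor
    · rintro ⟨h, h' | h'⟩
      · exact Or.inl ⟨b, a, ⟨h', YoungDiagram.mem_iff_lt_colLen.1 h⟩, rfl, rfl⟩
      · exact Or.inr ⟨a, h'.2, rfl, h'.1.symm⟩
    · rintro (⟨b', a', ⟨h1, h2⟩, rfl, rfl⟩ | ⟨a', h, rfl, rfl⟩)
      · exact ⟨YoungDiagram.mem_iff_lt_colLen.2 h2, Or.inl h1⟩
      · exact ⟨lam.up_left_mem h.le le_rfl hr, Or.inr ⟨rfl, h⟩⟩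
  rw [hb, Finset.sum_union, Finset.sum_image, Finset.sum_image, Finset.sum_sigma]
  · rw [Finset.sum_congr rfl fun c' hc' => specht_col lam x hx hr (Finset.mem_range.1 hc'),
      Finset.sum_congr rfl fun r' hr' => specht_same lam x
        (lam.up_left_mem (Finset.mem_range.1 hr').le le_rfl hr) hr (Finset.mem_range.1 hr').ne]
    simp; ring
  · intro a _ b _ h; simpa using h
  · rintro ⟨a, b⟩ _ ⟨a', b'⟩ _ h
    simp only [Prod.mk.injEq] at h
    obtain ⟨rfl, rfl⟩ := h
    rfl
  · rw [Finset.disjoint_left]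
    rintro ⟨a, b⟩ h1 h2
    simp only [Finset.mem_image, Finset.mem_sigma, Finset.mem_range,
      Prod.mk.injEq, Sigma.exists] at h1 h2
    obtain ⟨b', a', ⟨h, _⟩, rfl, rfl⟩ := h1
    obtain ⟨_, _, _, h3⟩ := h2
    omega

lemma specht_ne_zero (lam : YoungDiagram) (x : ℕ × ℕ → ℝ) (hx : Set.InjOn x lam.cells) :
    specht lam x ≠ 0 := by
  unfold specht
  rw [Finset.prod_ne_zero_iff]
  intro c _
  refine Matrix.det_vandermonde_ne_zero_iff.2 ?_
  intro a b hab
  have := hx (show ((a : ℕ), c) ∈ (lam.cells : Set _) from YoungDiagram.mem_iff_lt_colLen.2 a.2)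
        (show ((b : ℕ), c) ∈ (lam.cells : Set _) from YoungDiagram.mem_iff_lt_colLen.2 b.2) hab
  ext; simpa using this

/-- enumeration + function on the symmetric group -/
lemma exists_spechtFun (lam : YoungDiagram) (d : ℕ) (hd : lam.card = d) :
    ∃ (e : Fin d ≃ lam.cells) (F : Equiv.Perm (Fin d) → ℝ), F 1 ≠ 0 ∧
      ∀ σ k, ∑ j ∈ Finset.univ.filter (fun j => j < k), F (σ * Equiv.swap j k)
        = ((((e k : ℕ × ℕ).2 : ℝ) - ((e k : ℕ × ℕ).1 : ℝ))) * F σ := by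
  let emb : ℕ × ℕ → ℕ ×ₗ ℕ := fun p => toLex (p.2, p.1)
  have hemb : Function.Injective emb := by
    rintro ⟨a, b⟩ ⟨a', b'⟩ h
    have := toLex.injective h
    simp only [Prod.mk.injEq] at this
    rw [this.1, this.2]
  let C : Finset (ℕ ×ₗ ℕ) := lam.cells.image emb
  have hC : C.card = d := by rw [Finset.card_image_of_injective _ hemb]; exact hd
  let o : Fin d ≃o C := C.orderIsoOfFin hC
  let m : lam.cells ≃ C := Equiv.ofBijective
    (fun p => ⟨emb p, Finset.mem_image_of_mem _ p.2⟩) (by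
      constructor
      · intro a b h
        exact Subtype.val_injective (hemb (congrArg Subtype.val h))
      · rintro ⟨p, hp⟩
        obtain ⟨q, hq, rfl⟩ := Finset.mem_image.1 hp
        exact ⟨⟨q, hq⟩, rfl⟩)
  let e : Fin d ≃ lam.cells := o.toEquiv.trans m.symm
  have he : ∀ k, emb (e k) = (o k : ℕ ×ₗ ℕ) := by
    intro k
    have := m.apply_symm_apply (o k)
    exact congrArg Subtype.val this
  have hlt : ∀ j k, j < k ↔ ((e j : ℕ × ℕ).2 < (e k : ℕ × ℕ).2 ∨
      (e j : ℕ × ℕ).2 = (e k : ℕ × ℕ).2 ∧ (e j : ℕ × ℕ).1 < (e k : ℕ × ℕ).1) := by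
    intro j k
    rw [← o.lt_iff_lt, ← Subtype.coe_lt_coe, ← he, ← he]
    exact Prod.Lex.toLex_lt_toLex
  let xf : Equiv.Perm (Fin d) → ℕ × ℕ → ℝ := fun σ p =>
    if h : p ∈ lam.cells then ((σ (e.symm ⟨p, h⟩) : ℕ) : ℝ) else 0
  have xinj : ∀ σ, Set.InjOn (xf σ) lam.cells := by
    intro σ a ha b hb hab
    have ha' : a ∈ lam.cells := ha
    have hb' : b ∈ lam.cells := hb
    simp only [xf, dif_pos ha', dif_pos hb'] at hab
    have := e.symm.injective (σ.injective (Fin.val_injective (Nat.cast_injective hab)))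
    simpa using this
  have xswap : ∀ σ j k, xf (σ * Equiv.swap j k) = xf σ ∘ Equiv.swap (e j : ℕ × ℕ) (e k) := by
    intro σ j k
    ext p
    by_cases h : p ∈ lam.cells
    · obtain ⟨i, hi⟩ := e.surjective ⟨p, h⟩
      have hi' : p = e i := by rw [hi]
      subst hi'
      have inj : Function.Injective (fun i => (e i : ℕ × ℕ)) := Subtype.val_injective.comp e.injective
      have := inj.swap_apply j k i
      simp only [Function.comp] at this ⊢
      rw [this]
      simp [xf]
    · have h1 : Equiv.swap (e j : ℕ × ℕ) (e k) p = p := by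
        apply Equiv.swap_apply_of_ne_of_ne
        · rintro rfl; exact h (e j).2
        · rintro rfl; exact h (e k).2
      simp only [Function.comp, h1, xf, dif_neg h]
  refine ⟨e, fun σ => specht lam (xf σ), specht_ne_zero lam _ (xinj 1), fun σ k => ?_⟩
  have hk : ((e k : ℕ × ℕ).1, (e k : ℕ × ℕ).2) ∈ lam := (e k).2
  rw [← specht_eigen lam (xf σ) (xinj σ) hk]
  refine Finset.sum_bij (fun j _ => (e j : ℕ × ℕ)) ?_ ?_ ?_ ?_
  · intro j hj
    simp only [Finset.mem_filter, Finset.mem_univ, true_and, before] at hj ⊢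
    exact ⟨(e j).2, (hlt j k).1 hj⟩
  · intro a _ b _ h
    exact e.injective (Subtype.val_injective h)
  · intro p hp
    simp only [before, Finset.mem_filter] at hp
    obtain ⟨i, hi⟩ := e.surjective ⟨p, hp.1⟩
    have hi' : p = e i := by rw [hi]
    subst hi'
    exact ⟨i, by simpa using (hlt i k).2 hp.2, rfl⟩
  · intro j _
    simp only [xswap]

/-- Jucys–Murphy elements. -/
def JM (d : ℕ) (k : Fin d) : MonoidAlgebra ℝ (Equiv.Perm (Fin d)) :=
  ∑ j ∈ Finset.univ.filter (fun j => j < k), MonoidAlgebra.of ℝ _ (Equiv.swap j k)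

lemma of_mul_JM (d : ℕ) (k : Fin d) (π : Equiv.Perm (Fin d)) :
    MonoidAlgebra.of ℝ _ π * JM d k =
      (∑ j ∈ Finset.univ.filter (fun j => j < k), MonoidAlgebra.of ℝ _ (Equiv.swap (π j) (π k)))
        * MonoidAlgebra.of ℝ _ π := by
  unfold JM
  rw [Finset.mul_sum, Finset.sum_mul]
  refine Finset.sum_congr rfl fun j _ => ?_
  rw [← map_mul, ← map_mul, Equiv.mul_swap_eq_swap_mul]

lemma of_comm_JM (d : ℕ) (k : Fin d) (π : Equiv.Perm (Fin d)) (hk : π k = k)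
    (h : ∀ j, j < k ↔ π j < k) :
    MonoidAlgebra.of ℝ _ π * JM d k = JM d k * MonoidAlgebra.of ℝ _ π := by
  rw [of_mul_JM, hk]
  congr 1
  unfold JM
  refine Finset.sum_equiv π (fun j => ?_) (fun j _ => rfl)
  simpa using h j

lemma swap_comm_JM (d : ℕ) (k a b : Fin d) (ha : a ≠ k) (hb : b ≠ k) (h : a < k ↔ b < k) :
    MonoidAlgebra.of ℝ _ (Equiv.swap a b) * JM d k
      = JM d k * MonoidAlgebra.of ℝ _ (Equiv.swap a b) := by
  refine of_comm_JM d k _ (Equiv.swap_apply_of_ne_of_ne ha.symm hb.symm) (fun j => ?_)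
  by_cases h1 : j = a
  · subst h1; simpa using h
  · by_cases h2 : j = b
    · subst h2; simpa using h.symm
    · rw [Equiv.swap_apply_of_ne_of_ne h1 h2]

lemma JM_comm (d : ℕ) (j k : Fin d) : JM d j * JM d k = JM d k * JM d j := by
  wlog h : j < k generalizing j k
  · rcases eq_or_lt_of_le (not_lt.1 h) with h | h
    · rw [h]
    · exact (this k j h).symm
  rw [JM, Finset.sum_mul, Finset.mul_sum]
  refine Finset.sum_congr rfl fun i hi => ?_
  have hi : i < j := by simpa using hi
  exact swap_comm_JM d k i j (hi.trans h).ne h.ne (by simp [h, hi.trans h])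

lemma exists_JMhom (d : ℕ) : ∃ φ : MvPolynomial (Fin d) ℝ →ₐ[ℝ] MonoidAlgebra ℝ (Equiv.Perm (Fin d)),
    ∀ k, φ (MvPolynomial.X k) = JM d k := by
  have hc : ∀ a ∈ Set.range (JM d), ∀ b ∈ Set.range (JM d), a * b = b * a := by
    rintro _ ⟨j, rfl⟩ _ ⟨k, rfl⟩; exact JM_comm d j k
  let _ : CommRing (Algebra.adjoin ℝ (Set.range (JM d))) :=
    { (inferInstance : Ring (Algebra.adjoin ℝ (Set.range (JM d)))) with
      mul_comm := (Algebra.isMulCommutative_adjoin ℝ hc).is_comm.comm }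
  let ψ : MvPolynomial (Fin d) ℝ →ₐ[ℝ] Algebra.adjoin ℝ (Set.range (JM d)) :=
    MvPolynomial.aeval (fun k => ⟨JM d k, Algebra.subset_adjoin ⟨k, rfl⟩⟩)
  refine ⟨(Algebra.adjoin ℝ (Set.range (JM d))).val.comp ψ, fun k => ?_⟩
  simp [ψ]

lemma swap_JM_adj (n : ℕ) (i : Fin n) :
    MonoidAlgebra.of ℝ _ (Equiv.swap i.castSucc i.succ) * JM (n+1) i.castSucc
      = JM (n+1) i.succ * MonoidAlgebra.of ℝ _ (Equiv.swap i.castSucc i.succ) - 1 := by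
  have h1 : JM (n+1) i.succ = (∑ j ∈ Finset.univ.filter (fun j => j < i.castSucc),
      MonoidAlgebra.of ℝ _ (Equiv.swap (Equiv.swap i.castSucc i.succ j) (Equiv.swap i.castSucc i.succ i.castSucc)))
      + MonoidAlgebra.of ℝ _ (Equiv.swap i.castSucc i.succ) := by
    have : Finset.univ.filter (fun j => j < i.succ)
        = insert i.castSucc (Finset.univ.filter (fun j => j < i.castSucc)) := by
      ext j
      simp only [Finset.mem_filter, Finset.mem_univ, true_and, Finset.mem_insert, Fin.lt_def,
        Fin.ext_iff, Fin.val_succ, Fin.val_castSucc]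
      omega
    rw [JM, this, Finset.sum_insert (by simp)]
    refine (add_comm _ _).trans ?_
    congr 1
    refine Finset.sum_congr rfl fun j hj => ?_
    have hj : j < i.castSucc := by simpa using hj
    rw [Equiv.swap_apply_left, Equiv.swap_apply_of_ne_of_ne hj.ne
      (hj.trans (Fin.castSucc_lt_succ)).ne]
  rw [of_mul_JM, h1, add_mul, ← map_mul, Equiv.swap_mul_self, map_one, add_sub_cancel_right]

lemma swap_JM_adj' (n : ℕ) (i : Fin n) :
    MonoidAlgebra.of ℝ _ (Equiv.swap i.castSucc i.succ) * JM (n+1) i.succ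
      = JM (n+1) i.castSucc * MonoidAlgebra.of ℝ _ (Equiv.swap i.castSucc i.succ) + 1 := by
  have h := swap_JM_adj n i
  set s := MonoidAlgebra.of ℝ _ (Equiv.swap i.castSucc i.succ)
  have hs : s * s = 1 := by rw [← map_mul, Equiv.swap_mul_self, map_one]
  have h2 : s * (s * JM (n+1) i.castSucc) * s = s * (JM (n+1) i.succ * s - 1) * s := by rw [h]
  have e1 : s * (s * JM (n+1) i.castSucc) * s = JM (n+1) i.castSucc * s := by
    rw [← mul_assoc, hs, one_mul]
  have e2 : s * (JM (n+1) i.succ * s - 1) * s = s * JM (n+1) i.succ - 1 := by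
    rw [mul_sub, sub_mul, mul_one, hs, mul_assoc, mul_assoc, hs, mul_one]
  rw [e1, e2] at h2
  rw [h2]; abel

open MvPolynomial in
lemma hecke (n : ℕ) (i : Fin n)
    (φ : MvPolynomial (Fin (n+1)) ℝ →ₐ[ℝ] MonoidAlgebra ℝ (Equiv.Perm (Fin (n+1))))
    (hφ : ∀ k, φ (X k) = JM (n+1) k) (p : MvPolynomial (Fin (n+1)) ℝ) :
    ∃ q, (X i.castSucc - X i.succ) * q = rename (Equiv.swap i.castSucc i.succ) p - p ∧
      MonoidAlgebra.of ℝ _ (Equiv.swap i.castSucc i.succ) * φ p =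
        φ (rename (Equiv.swap i.castSucc i.succ) p)
          * MonoidAlgebra.of ℝ _ (Equiv.swap i.castSucc i.succ) + φ q := by
  set s := MonoidAlgebra.of ℝ _ (Equiv.swap i.castSucc i.succ) with hs
  induction p using MvPolynomial.induction_on with
  | C a =>
    refine ⟨0, by simp, ?_⟩
    rw [rename_C, map_zero, add_zero]
    have : φ (C a) = algebraMap ℝ _ a := φ.commutes a
    rw [this]
    exact (Algebra.commutes a s).symm
  | add p q hp hq =>
    obtain ⟨p', h1, h2⟩ := hp
    obtain ⟨q', h3, h4⟩ := hq
    refine ⟨p' + q', ?_, ?_⟩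
    · rw [mul_add, h1, h3, map_add]; ring
    · rw [map_add, mul_add, h2, h4, map_add, map_add, map_add, add_mul]; abel
  | mul_X p j hp =>
    obtain ⟨q, h1, h2⟩ := hp
    by_cases ha : j = i.castSucc
    · subst ha
      refine ⟨q * X i.castSucc - rename (Equiv.swap i.castSucc i.succ) p, ?_, ?_⟩
      · rw [map_mul, rename_X, Equiv.swap_apply_left]
        linear_combination X i.castSucc * h1
      · rw [map_mul, ← mul_assoc, h2, map_mul, rename_X, Equiv.swap_apply_left, map_sub, map_mul,
          map_mul, hφ, hφ, add_mul, mul_assoc _ s, swap_JM_adj]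
        noncomm_ring
    · by_cases hb : j = i.succ
      · subst hb
        refine ⟨q * X i.succ + rename (Equiv.swap i.castSucc i.succ) p, ?_, ?_⟩
        · rw [map_mul, rename_X, Equiv.swap_apply_right]
          linear_combination X i.succ * h1
        · rw [map_mul, ← mul_assoc, h2, map_mul, rename_X, Equiv.swap_apply_right, map_add, map_mul,
            map_mul, hφ, hφ, add_mul, mul_assoc _ s, swap_JM_adj']
          noncomm_ring
      · refine ⟨q * X j, ?_, ?_⟩
        · rw [map_mul, rename_X, Equiv.swap_apply_of_ne_of_ne ha hb]
          linear_combination X j * h1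
        · rw [map_mul, ← mul_assoc, h2, map_mul, rename_X, Equiv.swap_apply_of_ne_of_ne ha hb,
            map_mul, map_mul, hφ, add_mul, mul_assoc _ s, swap_comm_JM]
          · noncomm_ring
          · exact fun h => ha h.symm
          · exact fun h => hb h.symm
          · simp only [Fin.lt_def, Fin.ext_iff, Fin.val_succ, Fin.val_castSucc] at ha hb ⊢
            omega

open MvPolynomial in
lemma sym_central (n : ℕ)
    (φ : MvPolynomial (Fin (n+1)) ℝ →ₐ[ℝ] MonoidAlgebra ℝ (Equiv.Perm (Fin (n+1))))
    (hφ : ∀ k, φ (X k) = JM (n+1) k) (p : MvPolynomial (Fin (n+1)) ℝ) (hp : p.IsSymmetric) :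
    φ p ∈ Subalgebra.center ℝ (MonoidAlgebra ℝ (Equiv.Perm (Fin (n+1)))) := by
  have h1 : ∀ i : Fin n, MonoidAlgebra.of ℝ _ (Equiv.swap i.castSucc i.succ) * φ p
      = φ p * MonoidAlgebra.of ℝ _ (Equiv.swap i.castSucc i.succ) := by
    intro i
    obtain ⟨q, hq, h⟩ := hecke n i φ hφ p
    rw [hp] at hq h
    rw [sub_self] at hq
    have hne : (X i.castSucc - X i.succ : MvPolynomial (Fin (n+1)) ℝ) ≠ 0 := by
      rw [sub_ne_zero]
      intro h
      exact (Fin.castSucc_lt_succ (i := i)).ne (X_injective h)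
    rw [(mul_eq_zero.1 hq).resolve_left hne, map_zero, add_zero] at h
    exact h
  have h2 : ∀ π : Equiv.Perm (Fin (n+1)), MonoidAlgebra.of ℝ _ π * φ p
      = φ p * MonoidAlgebra.of ℝ _ π := by
    intro π
    have : π ∈ Submonoid.closure (Set.range fun i : Fin n ↦ Equiv.swap i.castSucc i.succ) := by
      rw [Equiv.Perm.mclosure_swap_castSucc_succ]; trivial
    induction this using Submonoid.closure_induction with
    | mem x hx => obtain ⟨i, rfl⟩ := hx; exact h1 i
    | one => rw [map_one, one_mul, mul_one]
    | mul x y _ _ hx hy => rw [map_mul, mul_assoc, hy, ← mul_assoc, hx, mul_assoc]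
  rw [Subalgebra.mem_center_iff]
  intro b
  induction b using MonoidAlgebra.induction_on with
  | of g => exact h2 g
  | add f g hf hg => rw [add_mul, mul_add, hf, hg]
  | smul r f hf => rw [smul_mul_assoc, mul_smul_comm, hf]


lemma mem_iff_lt_diag (lam : YoungDiagram) (i j : ℕ) :
    (i, j) ∈ lam ↔ min i j < (lam.cells.filter (fun p => content p = content (i, j))).card := by
  constructor
  · intro h
    have : ((Finset.range (min i j + 1)).image (fun t => (i - min i j + t, j - min i j + t)))
        ⊆ lam.cells.filter (fun p => content p = content (i, j)) := by
      intro p hp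
      simp only [Finset.mem_image, Finset.mem_range] at hp
      obtain ⟨t, ht, rfl⟩ := hp
      rw [Finset.mem_filter]
      unfold content
      refine ⟨lam.up_left_mem (by omega) (by omega) h, by omega⟩
    have h2 := Finset.card_le_card this
    rw [Finset.card_image_of_injective, Finset.card_range] at h2
    · omega
    · intro a b hab
      simp only [Prod.mk.injEq] at hab
      omega
  · intro h
    by_contra hn
    have : (lam.cells.filter (fun p => content p = content (i, j))).card ≤ (Finset.range (min i j)).card := by
      refine Finset.card_le_card_of_injOn (fun p => min p.1 p.2) ?_ ?_
      · rintro ⟨a, b⟩ hp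
        rw [Finset.mem_coe, Finset.mem_filter] at hp
        unfold content at hp
        simp only [Finset.coe_range, Set.mem_Iio]
        by_contra hlt
        exact hn (lam.up_left_mem (by omega) (by omega) hp.1)
      · rintro ⟨a, b⟩ hp ⟨a', b'⟩ hp' hab
        rw [Finset.mem_coe, Finset.mem_filter] at hp hp'
        unfold content at hp hp'
        simp only at hab
        simp only [Prod.mk.injEq]
        omega
    rw [Finset.card_range] at this
    omega

lemma young_ext_content (lam mu : YoungDiagram)
    (h : lam.cells.val.map content = mu.cells.val.map content) : lam = mu := by
  have hc : ∀ c, (lam.cells.filter (fun p => content p = c)).card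
      = (mu.cells.filter (fun p => content p = c)).card := by
    intro c
    have := congrArg (Multiset.count c) h
    rw [Multiset.count_map, Multiset.count_map] at this
    simp only [eq_comm (a := c)] at this
    exact this
  ext ⟨i, j⟩
  rw [YoungDiagram.mem_cells, YoungDiagram.mem_cells, mem_iff_lt_diag, mem_iff_lt_diag mu, hc]

lemma card_cellsOfRowLens (w : List ℕ) : (YoungDiagram.cellsOfRowLens w).card = w.sum := by
  induction w with
  | nil => simp [YoungDiagram.cellsOfRowLens]
  | cons a w ih =>
    rw [YoungDiagram.cellsOfRowLens, Finset.card_union_of_disjoint]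
    · simp [ih]
    · rw [Finset.disjoint_left]
      rintro ⟨i, j⟩ h1 h2
      simp only [Finset.mem_product, Finset.mem_singleton, Finset.mem_map] at h1 h2
      obtain ⟨p, _, hp⟩ := h2
      have := congrArg Prod.fst hp
      simp at this
      omega

instance young_finite (d : ℕ) : Finite {lam : YoungDiagram // lam.card = d} := by
  have : ∀ lam : {lam : YoungDiagram // lam.card = d},
      lam.1.cells ∈ (Finset.range d ×ˢ Finset.range d).powerset := by
    rintro ⟨lam, h⟩
    rw [Finset.mem_powerset]
    rintro ⟨i, j⟩ hij
    have h1 : ((Finset.range (i+1)).image (fun t => (t, j))) ⊆ lam.cells := by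
      intro p hp
      simp only [Finset.mem_image, Finset.mem_range] at hp
      obtain ⟨t, ht, rfl⟩ := hp
      exact lam.up_left_mem (by omega) le_rfl hij
    have h2 : ((Finset.range (j+1)).image (fun t => (i, t))) ⊆ lam.cells := by
      intro p hp
      simp only [Finset.mem_image, Finset.mem_range] at hp
      obtain ⟨t, ht, rfl⟩ := hp
      exact lam.up_left_mem le_rfl (by omega) hij
    have h1 := Finset.card_le_card h1
    have h2 := Finset.card_le_card h2
    rw [Finset.card_image_of_injective _ (by intro a b h; simpa using h), Finset.card_range] at h1 h2
    change _ ≤ lam.card at h1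
    change _ ≤ lam.card at h2
    simp only [Finset.mem_product, Finset.mem_range]
    omega
  refine Finite.of_injective (β := (Finset.range d ×ˢ Finset.range d).powerset)
    (fun lam => ⟨lam.1.cells, this lam⟩) ?_
  intro a b h
  apply Subtype.ext
  apply YoungDiagram.ext
  simpa using h

lemma card_partition_le (d : ℕ) :
    Nat.card (Nat.Partition d) ≤ Nat.card {lam : YoungDiagram // lam.card = d} := by
  have hs : ∀ p : Nat.Partition d, (p.parts.sort (· ≥ ·)).SortedGE := by
    intro p
    exact (p.parts.pairwise_sort (· ≥ ·)).sortedGE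
  refine Nat.card_le_card_of_injective (fun p => ⟨YoungDiagram.ofRowLens (p.parts.sort (· ≥ ·)) (hs p), ?_⟩) ?_
  · have := card_cellsOfRowLens (p.parts.sort (· ≥ ·))
    rw [← Multiset.sum_coe, Multiset.sort_eq, p.parts_sum] at this
    exact this
  · intro p q h
    have h1 := congrArg (fun l => YoungDiagram.rowLens l.1) h
    simp only at h1
    rw [YoungDiagram.rowLens_ofRowLens_eq_self, YoungDiagram.rowLens_ofRowLens_eq_self] at h1
    · apply Nat.Partition.ext
      rw [← Multiset.sort_eq p.parts (· ≥ ·), h1, Multiset.sort_eq]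
    · intro x hx; exact q.parts_pos ((Multiset.mem_sort _).1 hx)
    · intro x hx; exact p.parts_pos ((Multiset.mem_sort _).1 hx)

lemma finrank_center_le (d : ℕ) :
    Module.finrank ℝ (Subalgebra.toSubmodule (Subalgebra.center ℝ (MonoidAlgebra ℝ (Equiv.Perm (Fin d)))))
      ≤ Nat.card {lam : YoungDiagram // lam.card = d} := by
  classical
  refine le_trans ?_ (card_partition_le d)
  have hcl : ∀ z ∈ Subalgebra.center ℝ (MonoidAlgebra ℝ (Equiv.Perm (Fin d))),
      ∀ g h : Equiv.Perm (Fin d), IsConj g h → z.coeff g = z.coeff h := by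
    intro z hz g h hgh
    obtain ⟨c, rfl⟩ := isConj_iff.1 hgh
    have := Subalgebra.mem_center_iff.1 hz (MonoidAlgebra.single c 1)
    have h2 := congrArg (fun y => y.coeff (c * g)) this
    simp only [MonoidAlgebra.coeff_single_mul_apply, MonoidAlgebra.coeff_mul_single_apply] at h2
    simpa using h2
  let rep : Nat.Partition (Fintype.card (Fin d)) → Equiv.Perm (Fin d) := fun p =>
    if h : ∃ σ : Equiv.Perm (Fin d), σ.partition = p then h.choose else 1
  have hrep : ∀ σ, IsConj (rep σ.partition) σ := by
    intro σ
    have h : ∃ σ' : Equiv.Perm (Fin d), σ'.partition = σ.partition := ⟨σ, rfl⟩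
    rw [Equiv.Perm.partition_eq_of_isConj]
    simp only [rep, dif_pos h]
    exact h.choose_spec
  let L : Subalgebra.toSubmodule (Subalgebra.center ℝ (MonoidAlgebra ℝ (Equiv.Perm (Fin d))))
      →ₗ[ℝ] (Nat.Partition (Fintype.card (Fin d)) → ℝ) :=
    { toFun := fun z p => z.1.coeff (rep p)
      map_add' := fun a b => by ext; simp
      map_smul' := fun a b => by ext; simp }
  have hL : Function.Injective L := by
    intro a b hab
    apply Subtype.ext
    ext σ
    have := congrFun hab σ.partition
    simp only [L, LinearMap.coe_mk, AddHom.coe_mk] at this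
    rwa [hcl a.1 a.2 _ _ (hrep σ), hcl b.1 b.2 _ _ (hrep σ)] at this
  have := LinearMap.finrank_le_finrank_of_injective hL
  rw [Module.finrank_fintype_fun_eq_card, ← Nat.card_eq_fintype_card] at this
  simpa using this

lemma sum_monotone_eq_sym {A : Type*} [CommSemiring A] (d r : ℕ) (y : Fin d → A)
    [DecidablePred (fun f : Fin r → Fin d => Monotone f)] :
    ∑ f ∈ Finset.univ.filter (fun f : Fin r → Fin d => Monotone f), ∏ i, y (f i)
      = ∑ s : Sym (Fin d) r, (s.1.map y).prod := by
  refine Finset.sum_bij (fun f _ => ⟨(List.ofFn f : Multiset (Fin d)), by simp⟩) ?_ ?_ ?_ ?_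
  · intro f _; exact Finset.mem_univ _
  · intro f hf g hg h
    simp only [Finset.mem_filter, Finset.mem_univ, true_and] at hf hg
    have h1 : (List.ofFn f).Perm (List.ofFn g) := Multiset.coe_eq_coe.1 (congrArg Subtype.val h)
    have h2 := h1.eq_of_sortedLE (List.sortedLE_ofFn_iff.2 hf) (List.sortedLE_ofFn_iff.2 hg)
    exact List.ofFn_injective h2
  · rintro ⟨s, hs⟩ _
    have hl : (s.sort (· ≤ ·)).length = r := by rw [Multiset.length_sort, hs]
    subst hl
    refine ⟨(s.sort (· ≤ ·)).get, ?_, ?_⟩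
    · simp only [Finset.mem_filter, Finset.mem_univ, true_and]
      rw [← List.sortedLE_ofFn_iff, List.ofFn_get]
      exact (s.pairwise_sort (· ≤ ·)).sortedLE
    · apply Subtype.ext
      simp only [List.ofFn_get, Multiset.sort_eq]
  · intro f _
    simp [List.prod_ofFn]

/-- The functional attached to a Young diagram, as an eigenvector for Jucys–Murphy elements. -/
lemma exists_functional (lam : YoungDiagram) (d : ℕ) (hd : lam.card = d)
    (φ : MvPolynomial (Fin d) ℝ →ₐ[ℝ] MonoidAlgebra ℝ (Equiv.Perm (Fin d)))
    (hφ : ∀ k, φ (MvPolynomial.X k) = JM d k) :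
    ∃ (e : Fin d ≃ lam.cells) (F : MonoidAlgebra ℝ (Equiv.Perm (Fin d)) →ₗ[ℝ] ℝ), F 1 ≠ 0 ∧
      ∀ a p, F (a * φ p) = MvPolynomial.eval (fun k => (content (e k : ℕ × ℕ) : ℝ)) p * F a := by
  obtain ⟨e, F, h1, h2⟩ := exists_spechtFun lam d hd
  let b : Module.Basis (Equiv.Perm (Fin d)) ℝ (MonoidAlgebra ℝ (Equiv.Perm (Fin d))) :=
    Module.Basis.ofRepr (MonoidAlgebra.coeffLinearEquiv ℝ)
  have hb : ∀ g, b g = MonoidAlgebra.of ℝ _ g := fun g => rfl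
  let L := b.constr ℝ F
  have hL : ∀ g, L (MonoidAlgebra.of ℝ _ g) = F g := by
    intro g; rw [← hb]; exact b.constr_basis ℝ F g
  have hJ : ∀ a k, L (a * JM d k) = (content (e k : ℕ × ℕ) : ℝ) * L a := by
    intro a k
    induction a using MonoidAlgebra.induction_on with
    | of g =>
      rw [hL, JM, Finset.mul_sum, map_sum]
      simp only [← map_mul, hL]
      rw [h2]
      simp [content]
    | add f g hf hg => rw [add_mul, map_add, hf, hg, map_add, mul_add]
    | smul r f hf => rw [smul_mul_assoc, map_smul, hf, map_smul, smul_eq_mul, smul_eq_mul]; ring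
  refine ⟨e, L, ?_, ?_⟩
  · rw [← map_one (MonoidAlgebra.of ℝ (Equiv.Perm (Fin d))), hL]; exact h1
  · intro a p
    induction p using MvPolynomial.induction_on generalizing a with
    | C r =>
      have : φ (MvPolynomial.C r) = algebraMap ℝ _ r := φ.commutes r
      rw [this, ← Algebra.commutes, ← Algebra.smul_def, map_smul, MvPolynomial.eval_C, smul_eq_mul]
    | add p q hp hq => rw [map_add, mul_add, map_add, hp, hq, map_add, add_mul]
    | mul_X p j hp =>
      rw [map_mul φ, ← mul_assoc, hφ, hJ, hp, map_mul, MvPolynomial.eval_X]; ring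

lemma swap_inj_of_lt {d : ℕ} {a b a' b' : Fin d} (h : a < b) (h' : a' < b')
    (e : Equiv.swap a b = Equiv.swap a' b') : a = a' ∧ b = b' := by
  have h1 : Equiv.swap a' b' a = b := by rw [← e, Equiv.swap_apply_left]
  rw [Equiv.swap_apply_def] at h1
  split_ifs at h1 with h2 h3
  · exact ⟨h2, h1.symm⟩
  · subst h3; subst h1; exact absurd h (not_lt.2 h'.le)
  · exact absurd h1 h.ne

open scoped Classical in
lemma coeff_hsymm (d r : ℕ) (φ : MvPolynomial (Fin d) ℝ →ₐ[ℝ] MonoidAlgebra ℝ (Equiv.Perm (Fin d)))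
    (hφ : ∀ k, φ (MvPolynomial.X k) = JM d k) (u : Equiv.Perm (Fin d)) :
    (φ (MvPolynomial.hsymm (Fin d) ℝ r)).coeff u =
      ((Finset.univ.filter (fun τ : Fin r → Equiv.Perm (Fin d) => (List.ofFn τ).prod = u ∧
        (∀ i, (τ i).IsSwap) ∧
        (∀ i j : Fin r, i ≤ j → ∀ a b a' b' : Fin d, a < b → a' < b' →
          τ i = Equiv.swap a b → τ j = Equiv.swap a' b' → b ≤ b'))).card : ℝ) := by
  have e1 : MvPolynomial.hsymm (Fin d) ℝ r = ∑ f ∈ Finset.univ.filter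
      (fun f : Fin r → Fin d => Monotone f), ∏ i, MvPolynomial.X (f i) := by
    rw [sum_monotone_eq_sym]; rfl
  have e2 : ∀ f : Fin r → Fin d, φ (∏ i, MvPolynomial.X (f i)) =
      ∑ s ∈ Fintype.piFinset (fun i => Finset.univ.filter (fun j => j < f i)),
        MonoidAlgebra.of ℝ _ (List.ofFn (fun i => Equiv.swap (s i) (f i))).prod := by
    intro f
    rw [← List.prod_ofFn, map_list_prod, List.map_ofFn]
    have : (φ ∘ fun i => MvPolynomial.X (f i)) = fun i => ∑ j ∈ Finset.univ.filter (fun j => j < f i),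
        MonoidAlgebra.of ℝ _ (Equiv.swap j (f i)) := by
      ext1 i
      simp only [Function.comp, hφ, JM]
    rw [this]
    have h2 := (MultilinearMap.mkPiAlgebraFin ℝ r (MonoidAlgebra ℝ (Equiv.Perm (Fin d)))).map_sum_finset
      (fun i j => MonoidAlgebra.of ℝ _ (Equiv.swap j (f i)))
      (fun i => Finset.univ.filter (fun j => j < f i))
    simp only [MultilinearMap.mkPiAlgebraFin_apply] at h2
    rw [h2]
    refine Finset.sum_congr rfl fun s _ => ?_
    rw [map_list_prod, List.map_ofFn]
    rfl
  rw [e1, map_sum]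
  simp only [e2]
  rw [Finset.sum_sigma', MonoidAlgebra.coeff_sum, Finset.sum_apply']
  have e3 : ∀ x : (_ : Fin r → Fin d) × (Fin r → Fin d),
      (MonoidAlgebra.of ℝ _ (List.ofFn (fun i => Equiv.swap (x.2 i) (x.1 i))).prod).coeff u
      = if (List.ofFn (fun i => Equiv.swap (x.2 i) (x.1 i))).prod = u then 1 else 0 := by
    intro x
    rw [MonoidAlgebra.of_apply, MonoidAlgebra.coeff_single_apply]
  simp only [e3]
  rw [Finset.sum_boole]
  congr 1
  refine Finset.card_bij (fun x _ i => Equiv.swap (x.2 i) (x.1 i)) ?_ ?_ ?_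
  · rintro ⟨f, s⟩ hx
    simp only [Finset.mem_filter, Finset.mem_sigma, Finset.mem_univ, true_and,
      Fintype.mem_piFinset] at hx ⊢
    obtain ⟨⟨hf, hs⟩, hu⟩ := hx
    refine ⟨hu, fun i => ⟨_, _, (hs i).ne, rfl⟩, ?_⟩
    intro i j hij a b a' b' hab hab' h1 h2
    rw [← (swap_inj_of_lt (hs i) hab h1).2, ← (swap_inj_of_lt (hs j) hab' h2).2]
    exact hf hij
  · rintro ⟨f, s⟩ hx ⟨f', s'⟩ hx' h
    simp only [Finset.mem_filter, Finset.mem_sigma, Finset.mem_univ, true_and,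
      Fintype.mem_piFinset] at hx hx'
    have h1 := fun i => swap_inj_of_lt (hx.1.2 i) (hx'.1.2 i) (congrFun h i)
    have hf : f = f' := funext fun i => (h1 i).2
    have hs : s = s' := funext fun i => (h1 i).1
    rw [hf, hs]
  · intro τ hτ
    simp only [Finset.mem_filter, Finset.mem_univ, true_and] at hτ
    obtain ⟨hu, hsw, hm⟩ := hτ
    have : ∀ i, ∃ ab : Fin d × Fin d, ab.1 < ab.2 ∧ τ i = Equiv.swap ab.1 ab.2 := by
      intro i
      obtain ⟨a, b, hab, h⟩ := hsw i
      rcases lt_or_gt_of_ne hab with hlt | hlt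
      · exact ⟨(a, b), hlt, h⟩
      · exact ⟨(b, a), hlt, by rw [h, Equiv.swap_comm]⟩
    choose ab hlt hab using this
    have hτ : τ = fun i => Equiv.swap (ab i).1 (ab i).2 := funext hab
    refine ⟨⟨fun i => (ab i).2, fun i => (ab i).1⟩, ?_, hτ.symm⟩
    simp only [Finset.mem_filter, Finset.mem_sigma, Finset.mem_univ, true_and,
      Fintype.mem_piFinset]
    refine ⟨⟨fun i j hij => hm i j hij _ _ _ _ (hlt i) (hlt j) (hab i) (hab j), hlt⟩, ?_⟩
    rw [← hτ]; exact hu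

/-- The operator `x ↦ (∑ g x g⁻¹) z`. -/
def avgOp (d : ℕ) (z : MonoidAlgebra ℝ (Equiv.Perm (Fin d))) :
    MonoidAlgebra ℝ (Equiv.Perm (Fin d)) →ₗ[ℝ] MonoidAlgebra ℝ (Equiv.Perm (Fin d)) :=
  ∑ g : Equiv.Perm (Fin d), LinearMap.mulRight ℝ z ∘ₗ
    LinearMap.mulRight ℝ (MonoidAlgebra.of ℝ _ g⁻¹) ∘ₗ LinearMap.mulLeft ℝ (MonoidAlgebra.of ℝ _ g)

lemma avgOp_apply (d : ℕ) (z x : MonoidAlgebra ℝ (Equiv.Perm (Fin d))) :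
    avgOp d z x = ∑ g : Equiv.Perm (Fin d),
      MonoidAlgebra.of ℝ _ g * x * MonoidAlgebra.of ℝ _ g⁻¹ * z := by
  simp [avgOp, LinearMap.sum_apply]

lemma trace_avgOp (d : ℕ) (z : MonoidAlgebra ℝ (Equiv.Perm (Fin d))) :
    LinearMap.trace ℝ _ (avgOp d z) = ∑ x : Equiv.Perm (Fin d), ∑ g : Equiv.Perm (Fin d),
      z.coeff ((g * x * g⁻¹)⁻¹ * x) := by
  classical
  let b : Module.Basis (Equiv.Perm (Fin d)) ℝ (MonoidAlgebra ℝ (Equiv.Perm (Fin d))) :=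
    Module.Basis.ofRepr (MonoidAlgebra.coeffLinearEquiv ℝ)
  have hb : ∀ g, b g = MonoidAlgebra.of ℝ _ g := fun g => rfl
  rw [LinearMap.trace_eq_matrix_trace ℝ b, Matrix.trace]
  refine Finset.sum_congr rfl fun x _ => ?_
  rw [Matrix.diag_apply, LinearMap.toMatrix_apply, hb, avgOp_apply]
  change (∑ g : Equiv.Perm (Fin d), _ : MonoidAlgebra ℝ (Equiv.Perm (Fin d))).coeff x = _
  rw [MonoidAlgebra.coeff_sum, Finset.sum_apply']
  refine Finset.sum_congr rfl fun g _ => ?_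
  rw [← map_mul, ← map_mul, MonoidAlgebra.of_apply, MonoidAlgebra.coeff_single_mul_apply, one_mul]

lemma avgOp_mem (d : ℕ) (z : MonoidAlgebra ℝ (Equiv.Perm (Fin d)))
    (hz : z ∈ Subalgebra.center ℝ (MonoidAlgebra ℝ (Equiv.Perm (Fin d))))
    (x : MonoidAlgebra ℝ (Equiv.Perm (Fin d))) :
    avgOp d z x ∈ Subalgebra.center ℝ (MonoidAlgebra ℝ (Equiv.Perm (Fin d))) := by
  rw [avgOp_apply, ← Finset.sum_mul]
  refine mul_mem ?_ hz
  rw [Subalgebra.mem_center_iff]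
  intro b
  induction b using MonoidAlgebra.induction_on with
  | of h =>
    rw [Finset.mul_sum, Finset.sum_mul]
    refine Finset.sum_equiv (Equiv.mulLeft h) (by simp) (fun g _ => ?_)
    simp only [Equiv.coe_mulLeft, mul_inv_rev, map_mul, mul_assoc]
    rw [← map_mul (MonoidAlgebra.of ℝ _) h⁻¹ h, inv_mul_cancel, map_one, mul_one]
  | add f g hf hg => rw [add_mul, mul_add, hf, hg]
  | smul r f hf => rw [smul_mul_assoc, mul_smul_comm, hf]

lemma avgOp_center (d : ℕ) (z x : MonoidAlgebra ℝ (Equiv.Perm (Fin d)))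
    (hx : x ∈ Subalgebra.center ℝ (MonoidAlgebra ℝ (Equiv.Perm (Fin d)))) :
    avgOp d z x = (d.factorial : ℝ) • (x * z) := by
  rw [avgOp_apply]
  have : ∀ g : Equiv.Perm (Fin d),
      MonoidAlgebra.of ℝ _ g * x * MonoidAlgebra.of ℝ _ g⁻¹ * z = x * z := by
    intro g
    rw [Subalgebra.mem_center_iff.1 hx, mul_assoc x, ← map_mul, mul_inv_cancel, map_one, mul_one]
  rw [Finset.sum_congr rfl fun g _ => this g, Finset.sum_const, Finset.card_univ, Fintype.card_perm,
    Fintype.card_fin, Nat.cast_smul_eq_nsmul]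

/-- Evaluation of symmetric polynomials at contents separates Young diagrams. -/
lemma eval_separates (d : ℕ) (lam mu : YoungDiagram) (e : Fin d ≃ lam.cells) (e' : Fin d ≃ mu.cells)
    (h : ∀ p : MvPolynomial (Fin d) ℝ, p.IsSymmetric →
      MvPolynomial.eval (fun k => (content (e k : ℕ × ℕ) : ℝ)) p
        = MvPolynomial.eval (fun k => (content (e' k : ℕ × ℕ) : ℝ)) p) : lam = mu := by
  apply young_ext_content
  have hroots : ∀ x : Fin d → ℝ, (∏ k, (Polynomial.X - Polynomial.C (x k))).roots
      = Finset.univ.val.map x := by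
    intro x
    exact Polynomial.roots_multiset_prod_X_sub_C (Finset.univ.val.map x) ▸ (by
      rw [Multiset.map_map]; rfl)
  have hpoly : (∏ k, (Polynomial.X - Polynomial.C ((content (e k : ℕ × ℕ) : ℝ))))
      = ∏ k, (Polynomial.X - Polynomial.C ((content (e' k : ℕ × ℕ) : ℝ))) := by
    apply Polynomial.funext
    intro t
    have := h (∏ k, (MvPolynomial.C t - MvPolynomial.X k)) (by
      intro s
      rw [map_prod]
      simp only [map_sub, MvPolynomial.rename_C, MvPolynomial.rename_X]
      exact Equiv.prod_comp s (fun k => (MvPolynomial.C t - MvPolynomial.X k : MvPolynomial (Fin d) ℝ)))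
    simpa [Polynomial.eval_prod, MvPolynomial.eval_prod] using this
  have hm : (Finset.univ.val.map fun k => (content (e k : ℕ × ℕ) : ℝ))
      = Finset.univ.val.map fun k => (content (e' k : ℕ × ℕ) : ℝ) := by
    rw [← hroots, hpoly, hroots]
  have hcells : ∀ (nu : YoungDiagram) (f : Fin d ≃ nu.cells),
      Finset.univ.val.map (fun k => (content (f k : ℕ × ℕ) : ℝ))
        = (nu.cells.val.map content).map (fun c : ℤ => (c : ℝ)) := by
    intro nu f
    have h1 : nu.cells.val = Finset.univ.val.map (fun k => (f k : ℕ × ℕ)) := by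
      have : nu.cells = Finset.univ.map (f.toEmbedding.trans (Function.Embedding.subtype _)) := by
        ext p
        simp only [Finset.mem_map, Finset.mem_univ, true_and]
        constructor
        · intro hp
          exact ⟨f.symm ⟨p, hp⟩, by simp⟩
        · rintro ⟨k, rfl⟩
          exact (f k).2
      conv_lhs => rw [this]
      rfl
    rw [h1, Multiset.map_map, Multiset.map_map]
    rfl
  rw [hcells, hcells] at hm
  exact Multiset.map_injective Int.cast_injective hm

lemma hYoung_eq (r d : ℕ) (lam : YoungDiagram) (hd : lam.card = d) (e : Fin d ≃ lam.cells) :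
    hYoung r lam = MvPolynomial.eval (fun k => (content (e k : ℕ × ℕ) : ℝ))
      (MvPolynomial.hsymm (Fin d) ℝ r) := by
  subst hd
  have h1 : ∀ (n : ℕ) (x : Fin n → ℝ), hsym n r x = MvPolynomial.eval x (MvPolynomial.hsymm (Fin n) ℝ r) := by
    intro n x
    rw [hsym, sum_monotone_eq_sym, MvPolynomial.hsymm, map_sum]
    refine Finset.sum_congr rfl fun s _ => ?_
    rw [map_multiset_prod, Multiset.map_map]
    congr 1
    refine Multiset.map_congr rfl fun k _ => ?_
    simp
  rw [hYoung, h1]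
  let s : Equiv.Perm (Fin lam.card) := e.trans lam.cells.equivFin
  have h2 := MvPolynomial.hsymm_isSymmetric (Fin lam.card) ℝ r s
  rw [← h2, MvPolynomial.eval_rename, h2]
  congr 2
  ext k
  simp [s]

/-- The main trace computation. -/
lemma trace_eq (n r : ℕ)
    (φ : MvPolynomial (Fin (n+1)) ℝ →ₐ[ℝ] MonoidAlgebra ℝ (Equiv.Perm (Fin (n+1))))
    (hφ : ∀ k, φ (MvPolynomial.X k) = JM (n+1) k) :
    LinearMap.trace ℝ _ (avgOp (n+1) (φ (MvPolynomial.hsymm (Fin (n+1)) ℝ r)))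
      = ((n+1).factorial : ℝ) * ∑' lam : {lam : YoungDiagram // lam.card = n+1}, hYoung r lam.1 := by
  classical
  let Y := {lam : YoungDiagram // lam.card = n+1}
  have : Fintype Y := Fintype.ofFinite Y
  let Z := Subalgebra.toSubmodule (Subalgebra.center ℝ (MonoidAlgebra ℝ (Equiv.Perm (Fin (n+1)))))
  choose e F hF1 hF using fun lam : Y => exists_functional lam.1 (n+1) lam.2 φ hφ
  let z := φ (MvPolynomial.hsymm (Fin (n+1)) ℝ r)
  have hz : z ∈ Z := sym_central n φ hφ _ (MvPolynomial.hsymm_isSymmetric _ _ r)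
  let cont : Y → Fin (n+1) → ℝ := fun lam k => (content (e lam k : ℕ × ℕ) : ℝ)
  let ev : Y → (MvPolynomial.symmetricSubalgebra (Fin (n+1)) ℝ →* ℝ) := fun lam =>
    ((MvPolynomial.eval (cont lam)).toMonoidHom).comp
      (MvPolynomial.symmetricSubalgebra (Fin (n+1)) ℝ).val.toRingHom.toMonoidHom
  have hev : ∀ lam p, ev lam p = MvPolynomial.eval (cont lam) p.1 := fun _ _ => rfl
  have evinj : Function.Injective ev := by
    intro lam mu h
    apply Subtype.ext
    refine eval_separates (n+1) lam.1 mu.1 (e lam) (e mu) (fun p hp => ?_)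
    exact DFunLike.congr_fun h ⟨p, hp⟩
  have evind := (linearIndependent_monoidHom
    (MvPolynomial.symmetricSubalgebra (Fin (n+1)) ℝ) ℝ).comp ev evinj
  let Ψ : Z →ₗ[ℝ] (Y → ℝ) := LinearMap.pi (fun lam => F lam ∘ₗ Z.subtype)
  have hΨ : ∀ a lam, Ψ a lam = F lam a.1 := fun _ _ => rfl
  have hsurj : LinearMap.range Ψ = ⊤ := by
    by_contra hne
    obtain ⟨f, hf0, hf⟩ := Submodule.exists_le_ker_of_lt_top _ (lt_top_iff_ne_top.2 hne)
    have hfs : ∀ v : Y → ℝ, f v = ∑ lam, v lam * f (Pi.single lam 1) := by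
      intro v
      conv_lhs => rw [← Finset.univ_sum_single v, map_sum]
      refine Finset.sum_congr rfl fun lam _ => ?_
      rw [← smul_eq_mul, ← map_smul]
      congr 1
      rw [← Pi.single_smul, smul_eq_mul, mul_one]
    have hcoef := Fintype.linearIndependent_iff.1 evind (fun lam => F lam 1 * f (Pi.single lam 1)) (by
      ext p
      have hp : φ p.1 ∈ Z := sym_central n φ hφ p.1 p.2
      have := hf (LinearMap.mem_range_self Ψ ⟨φ p.1, hp⟩)
      rw [LinearMap.mem_ker, hfs] at this
      rw [Finset.sum_apply]
      refine Eq.trans ?_ this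
      refine Finset.sum_congr rfl fun lam _ => ?_
      have h3 := hF lam 1 p.1
      rw [one_mul] at h3
      rw [hΨ, h3]
      simp only [Pi.smul_apply, smul_eq_mul, Function.comp, hev]
      ring)
    apply hf0
    ext1 lam
    ext
    have := (mul_eq_zero.1 (hcoef lam)).resolve_left (hF1 lam)
    simpa using this
  have hker : LinearMap.ker Ψ = ⊥ := by
    have h1 := LinearMap.finrank_range_add_finrank_ker Ψ
    have h2 := finrank_center_le (n+1)
    rw [hsurj, finrank_top, Module.finrank_fintype_fun_eq_card] at h1
    rw [Nat.card_eq_fintype_card] at h2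
    have h3 : Module.finrank ℝ (LinearMap.ker Ψ) = 0 := by
      change Module.finrank ℝ Z ≤ Fintype.card Y at h2
      omega
    exact Submodule.finrank_eq_zero.1 h3
  let E : Z ≃ₗ[ℝ] (Y → ℝ) := LinearEquiv.ofBijective Ψ
    ⟨LinearMap.ker_eq_bot.1 hker, LinearMap.range_eq_top.1 hsurj⟩
  have hE : ∀ a lam, E a lam = F lam a.1 := fun _ _ => rfl
  rw [← LinearMap.trace_restrict_eq_of_forall_mem Z (avgOp (n+1) z) (fun x => avgOp_mem (n+1) z hz x),
    ← LinearMap.trace_conj' _ E, LinearMap.trace_eq_matrix_trace ℝ (Pi.basisFun ℝ Y), Matrix.trace,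
    tsum_fintype, Finset.mul_sum]
  refine Finset.sum_congr rfl fun lam _ => ?_
  rw [Matrix.diag_apply, LinearMap.toMatrix_apply, Pi.basisFun_repr, Pi.basisFun_apply,
    LinearEquiv.conj_apply_apply, hE, LinearMap.restrict_coe_apply,
    avgOp_center (n+1) z _ (E.symm (Pi.single lam 1)).2, map_smul, hF, ← hE, E.apply_symm_apply,
    Pi.single_eq_same, mul_one, smul_eq_mul, hYoung_eq r (n+1) lam.1 lam.2 (e lam)]

/-- `H_g^d = d! · Σ_{λ ∈ Y^d} h_{2g−2}(λ)` equals the number of tuples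
`(π₁, π₂, τ₁, …, τ_{2g−2})` of permutations of `{1,…,d}` such that
(1) `π₁π₂π₁⁻¹π₂⁻¹τ₁⋯τ_{2g−2}` is the identity, (2) each `τ_i` is a transposition, and
(3) writing `τ_i = (s_i t_i)` with `s_i < t_i`, one has `t₁ ≤ … ≤ t_{2g−2}`. -/
theorem Hgd_eq_card_monotone_factorizations (g d : ℕ) (hg : 1 ≤ g) (hd : 1 ≤ d) :
    Hgd g d = (Nat.card
      {c : Equiv.Perm (Fin d) × Equiv.Perm (Fin d) × (Fin (2 * g - 2) → Equiv.Perm (Fin d)) //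
        c.1 * c.2.1 * c.1⁻¹ * c.2.1⁻¹ * (List.ofFn c.2.2).prod = 1 ∧
        (∀ i, (c.2.2 i).IsSwap) ∧
        (∀ i j : Fin (2 * g - 2), i ≤ j → ∀ a b a' b' : Fin d, a < b → a' < b' →
          c.2.2 i = Equiv.swap a b → c.2.2 j = Equiv.swap a' b' → b ≤ b')} : ℝ) := by
  classical
  obtain ⟨n, rfl⟩ : ∃ n, d = n + 1 := ⟨d - 1, by omega⟩
  obtain ⟨φ, hφ⟩ := exists_JMhom (n+1)
  rw [Hgd, ← trace_eq n (2*g-2) φ hφ, trace_avgOp]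
  simp only [coeff_hsymm _ _ φ hφ]
  rw [Nat.card_eq_fintype_card, Fintype.card_subtype, Finset.card_filter, Fintype.sum_prod_type]
  simp only [Fintype.sum_prod_type, Nat.cast_sum]
  refine Fintype.sum_equiv (Equiv.inv _) _ _ fun x => ?_
  refine Finset.sum_congr rfl fun y _ => ?_
  rw [Finset.card_filter, Nat.cast_sum]
  refine Finset.sum_congr rfl fun τ _ => ?_
  congr 1
  refine if_congr (and_congr ?_ Iff.rfl) rfl rfl
  simp only [Equiv.inv_apply]
  rw [mul_eq_one_iff_inv_eq, eq_comm]
  have : (y * x * y⁻¹)⁻¹ * x = (x⁻¹ * y * x⁻¹⁻¹ * y⁻¹)⁻¹ := by group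
  rw [this]
end
end

section
/- For all integers g ≥ 1 and d ≥ 1, the number of tuples (π₁, π₂, τ₁, …, τ_{2g−2}) of permutations of {1,…,d} such that π₁π₂π₁⁻¹π₂⁻¹τ₁⋯τ_{2g−2} is the identity and each τ_i is a transposition (with no monotonicity or transitivity constraint) equals d! · Σ_{λ ∈ Y^d} (Σ_{□ ∈ λ} c(□))^{2g−2}, where the inner sum is over the cells of λ and c(□) is the content of the cell. -/
noncomputable section

namespace CutJoin

variable {d : ℕ}

/-- Words of length `d` in the alphabet `Fin d`. -/
abbrev Word (d : ℕ) := Fin d → Fin d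

/-- The weight of a word: number of occurrences of each letter. -/
def wt (w : Word d) (a : Fin d) : ℕ := (Finset.univ.filter (fun i => w i = a)).card

/-- The place permutation action on functions on words. -/
def opA (σ : Equiv.Perm (Fin d)) : Module.End ℝ (Word d → ℝ) where
  toFun F w := F (w ∘ σ)
  map_add' _ _ := rfl
  map_smul' _ _ := rfl

/-- The polarization operator. -/
def opE (a b : Fin d) : Module.End ℝ (Word d → ℝ) where
  toFun F w := ∑ i, if w i = a then F (Function.update w i b) else 0
  map_add' F G := by
    ext w
    simp only [Pi.add_apply, ← Finset.sum_add_distrib]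
    exact Finset.sum_congr rfl fun i _ => by split_ifs <;> simp
  map_smul' r F := by
    ext w
    simp [Finset.mul_sum]

/-- Projection to a weight space. -/
def opP (μ : Fin d → ℕ) : Module.End ℝ (Word d → ℝ) where
  toFun F w := if wt w = μ then F w else 0
  map_add' F G := by
    ext w
    simp only [Pi.add_apply]
    split_ifs <;> simp
  map_smul' r F := by
    ext w
    simp

/-- The operator counting the letter `a`. -/
def opN (a : Fin d) : Module.End ℝ (Word d → ℝ) where
  toFun F w := (wt w a : ℝ) * F w
  map_add' F G := by
    ext w
    simp [mul_add]
  map_smul' r F := by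
    ext w
    simp; ring

/-- Sum of all swaps of a letter `a` with a letter `b` (at different places). -/
def opS (a b : Fin d) : Module.End ℝ (Word d → ℝ) where
  toFun F w := ∑ i, ∑ j, if w i = a ∧ w j = b ∧ i ≠ j then F (w ∘ Equiv.swap i j) else 0
  map_add' F G := by
    ext w
    simp only [Pi.add_apply, ← Finset.sum_add_distrib]
    exact Finset.sum_congr rfl fun i _ => Finset.sum_congr rfl fun j _ => by split_ifs <;> simp
  map_smul' r F := by
    ext w
    simp [Finset.mul_sum]

lemma opA_mul (σ τ : Equiv.Perm (Fin d)) : opA (σ * τ) = opA σ * opA τ := by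
  ext F w
  rfl

lemma opE_opA (a b : Fin d) (σ : Equiv.Perm (Fin d)) : opE a b * opA σ = opA σ * opE a b := by
  apply LinearMap.ext; intro F; funext w
  change (∑ i, if w i = a then F (Function.update w i b ∘ σ) else 0) =
    ∑ i, if w (σ i) = a then F (Function.update (w ∘ σ) i b) else 0
  rw [← Equiv.sum_comp σ]
  refine Finset.sum_congr rfl fun i _ => ?_
  rw [Function.update_comp_equiv]
  simp

lemma opS_symm (a b : Fin d) : opS a b = opS b a := by
  apply LinearMap.ext; intro F; funext w
  change (∑ i, ∑ j, if w i = a ∧ w j = b ∧ i ≠ j then F (w ∘ Equiv.swap i j) else 0) =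
    ∑ i, ∑ j, if w i = b ∧ w j = a ∧ i ≠ j then F (w ∘ Equiv.swap i j) else 0
  rw [Finset.sum_comm]
  refine Finset.sum_congr rfl fun i _ => Finset.sum_congr rfl fun j _ => ?_
  rw [Equiv.swap_comm]
  congr 1
  simp only [ne_eq, eq_comm (a := i) (b := j)]
  apply propext; tauto

lemma opE_opE (a b : Fin d) (hab : a ≠ b) : opE a b * opE b a = opN a + opS a b := by
  apply LinearMap.ext; intro F; funext w
  change (∑ i, if w i = a then (∑ j, if Function.update w i b j = b then
      F (Function.update (Function.update w i b) j a) else 0) else 0) =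
    (wt w a : ℝ) * F w +
    ∑ i, ∑ j, if w i = a ∧ w j = b ∧ i ≠ j then F (w ∘ Equiv.swap i j) else 0
  have h1 : (wt w a : ℝ) * F w = ∑ i, if w i = a then F w else 0 := by
    rw [← Finset.sum_filter, Finset.sum_const, wt, nsmul_eq_mul]
  rw [h1, ← Finset.sum_add_distrib]
  refine Finset.sum_congr rfl fun i _ => ?_
  by_cases hi : w i = a
  · simp only [hi, if_true, true_and]
    rw [← Finset.add_sum_erase _ _ (Finset.mem_univ i)]
    rw [← Finset.add_sum_erase (a := i) (f := fun j => if w j = b ∧ i ≠ j then F (w ∘ Equiv.swap i j) else 0) _ (Finset.mem_univ i)]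
    simp only [Function.update_self, if_true, Function.update_idem, ne_eq, not_true, and_false,
      if_false, zero_add]
    congr 1
    · congr 1
      rw [← hi, Function.update_eq_self]
    · refine Finset.sum_congr rfl fun j hj => ?_
      have hji : j ≠ i := Finset.ne_of_mem_erase hj
      rw [Function.update_of_ne hji]
      by_cases hj2 : w j = b
      · simp only [hj2, if_true, hji.symm, not_false_eq_true, and_self]
        congr 1
        funext k
        simp only [Function.update_apply, Function.comp, Equiv.swap_apply_def]
        split_ifs <;> simp_all
      · simp [hj2]
  · simp [hi]

lemma wt_update (w : Word d) (i a b : Fin d) (hi : w i = b) :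
    wt (Function.update w i a) + Pi.single b 1 = wt w + Pi.single a 1 := by
  funext c
  have key : ∀ v : Word d, wt v c = ∑ j, if v j = c then 1 else 0 := fun v => by
    simp [wt]
  simp only [Pi.add_apply, key]
  rw [← Finset.add_sum_erase _ _ (Finset.mem_univ i)]
  conv_rhs => rw [← Finset.add_sum_erase _ _ (Finset.mem_univ i)]
  have : ∑ j ∈ Finset.univ.erase i, (if Function.update w i a j = c then 1 else 0) =
    ∑ j ∈ Finset.univ.erase i, (if w j = c then 1 else 0) := by
    refine Finset.sum_congr rfl fun j hj => ?_
    rw [Function.update_of_ne (Finset.ne_of_mem_erase hj)]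
  rw [this, Function.update_self, hi]
  simp only [Pi.single_apply, eq_comm (a := c)]
  ring

lemma opP_opE (μ : Fin d → ℕ) (a b : Fin d) :
    opP (μ + Pi.single b 1) * opE b a = opE b a * opP (μ + Pi.single a 1) := by
  apply LinearMap.ext; intro F; funext w
  change (if wt w = μ + Pi.single b 1 then
      (∑ i, if w i = b then F (Function.update w i a) else 0) else 0) =
    ∑ i, if w i = b then (if wt (Function.update w i a) = μ + Pi.single a 1 then
      F (Function.update w i a) else 0) else 0
  have key : ∀ i, w i = b → (wt (Function.update w i a) = μ + Pi.single a 1 ↔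
      wt w = μ + Pi.single b 1) := by
    intro i hi
    have h := wt_update w i a b hi
    constructor
    · intro h2
      rw [h2] at h
      have : wt w + Pi.single a 1 = (μ + Pi.single b 1) + Pi.single a 1 := by
        rw [← h]; abel
      exact add_right_cancel this
    · intro h2
      rw [h2] at h
      have : wt (Function.update w i a) + Pi.single b 1 = (μ + Pi.single a 1) + Pi.single b 1 := by
        rw [h]; abel
      exact add_right_cancel this
  by_cases h : wt w = μ + Pi.single b 1
  · rw [if_pos h]
    refine Finset.sum_congr rfl fun i _ => ?_
    by_cases hi : w i = b
    · simp only [hi, if_true, (key i hi).2 h]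
    · simp [hi]
  · rw [if_neg h]
    symm
    refine Finset.sum_eq_zero fun i _ => ?_
    by_cases hi : w i = b
    · rw [if_pos hi, if_neg (fun h2 => h ((key i hi).1 h2))]
    · simp [hi]

lemma opP_opE_zero (μ : Fin d → ℕ) (a b : Fin d) (h : μ b = 0) :
    opP μ * opE b a = 0 := by
  apply LinearMap.ext; intro F; funext w
  change (if wt w = μ then
      (∑ i, if w i = b then F (Function.update w i a) else 0) else 0) = 0
  split_ifs with hw
  · refine Finset.sum_eq_zero fun i _ => ?_
    rw [if_neg]
    intro hi
    have : wt w b = 0 := by rw [hw, h]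
    rw [wt, Finset.card_eq_zero, Finset.filter_eq_empty_iff] at this
    exact this (Finset.mem_univ i) hi
  · rfl

lemma opP_opN (μ : Fin d → ℕ) (a : Fin d) : opP μ * opN a = (μ a : ℝ) • opP μ := by
  apply LinearMap.ext; intro F; funext w
  change (if wt w = μ then (wt w a : ℝ) * F w else 0) = (μ a : ℝ) * (if wt w = μ then F w else 0)
  split_ifs with h
  · rw [h]
  · simp

lemma opP_opS_self (μ : Fin d → ℕ) (a : Fin d) :
    opP μ * opS a a = ((μ a : ℝ) * ((μ a : ℝ) - 1)) • opP μ := by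
  apply LinearMap.ext; intro F; funext w
  change (if wt w = μ then
    (∑ i, ∑ j, if w i = a ∧ w j = a ∧ i ≠ j then F (w ∘ Equiv.swap i j) else 0) else 0) =
    ((μ a : ℝ) * ((μ a : ℝ) - 1)) * (if wt w = μ then F w else 0)
  split_ifs with h
  · have h1 : ∀ i j, (if w i = a ∧ w j = a ∧ i ≠ j then F (w ∘ Equiv.swap i j) else 0) =
      (if w i = a then (if w j = a then F w else 0) else 0) -
        if i = j then (if w i = a then F w else 0) else 0 := by
      intro i j
      by_cases hij : i = j
      · subst hij
        by_cases hi : w i = a <;> simp [hi]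
      · by_cases hi : w i = a <;> by_cases hj : w j = a <;> simp [hi, hj, hij]
        congr 1
        funext k
        simp only [Function.comp, Equiv.swap_apply_def]
        split_ifs <;> simp_all
    have h2 : ∀ x : ℝ, (∑ i, if w i = a then x else 0) = (μ a : ℝ) * x := by
      intro x
      rw [← Finset.sum_filter, Finset.sum_const, nsmul_eq_mul, ← h, wt]
    simp only [h1, Finset.sum_sub_distrib]
    simp only [Finset.sum_ite_eq, Finset.mem_univ, if_true, h2]
    have h3 : ∀ i, (∑ j, if w i = a then (if w j = a then F w else 0) else 0) =
      if w i = a then (μ a : ℝ) * F w else 0 := by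
      intro i
      split_ifs <;> simp [h2]
    simp only [h3, h2]
    ring
  · simp

/-- The permutation character attached to a weight. -/
def chi (μ : Fin d → ℕ) (σ : Equiv.Perm (Fin d)) : ℝ :=
  LinearMap.trace ℝ (Word d → ℝ) (opP μ * opA σ)

open Classical in
lemma sum_swaps (f : Equiv.Perm (Fin d) → ℝ) :
    2 * ∑ τ : Equiv.Perm (Fin d), (if τ.IsSwap then f τ else 0) =
      ∑ i, ∑ j, if i ≠ j then f (Equiv.swap i j) else 0 := by
  have h : ∀ i j, (if i ≠ j then f (Equiv.swap i j) else 0) =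
      ∑ τ : Equiv.Perm (Fin d), if i ≠ j ∧ τ = Equiv.swap i j then f τ else 0 := by
    intro i j
    by_cases hij : i = j <;> simp [hij]
  simp only [h]
  rw [Finset.mul_sum]
  have : ∀ i, ∑ j, ∑ τ : Equiv.Perm (Fin d), (if i ≠ j ∧ τ = Equiv.swap i j then f τ else 0) =
     ∑ τ : Equiv.Perm (Fin d), ∑ j, (if i ≠ j ∧ τ = Equiv.swap i j then f τ else 0) :=
    fun i => Finset.sum_comm
  simp only [this]
  rw [Finset.sum_comm]
  refine Finset.sum_congr rfl fun τ _ => ?_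
  by_cases hτ : τ.IsSwap
  · rw [if_pos hτ]
    obtain ⟨x, y, hxy, rfl⟩ := hτ
    have : ∀ i j, (i ≠ j ∧ Equiv.swap x y = Equiv.swap i j) ↔ ((i = x ∧ j = y) ∨ (i = y ∧ j = x)) := by
      intro i j
      constructor
      · rintro ⟨hij, h⟩
        have h1 := congrArg (fun e : Equiv.Perm (Fin d) => e x) h
        have h2 := congrArg (fun e : Equiv.Perm (Fin d) => e y) h
        simp only [Equiv.swap_apply_left, Equiv.swap_apply_right, Equiv.swap_apply_def] at h1 h2
        grind
      · rintro (⟨rfl, rfl⟩ | ⟨rfl, rfl⟩)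
        · exact ⟨hxy, rfl⟩
        · exact ⟨hxy.symm, Equiv.swap_comm _ _⟩
    simp only [this]
    have h4 : ∀ i j, (if (i = x ∧ j = y) ∨ (i = y ∧ j = x) then f (Equiv.swap x y) else 0) =
       (if i = x then (if j = y then f (Equiv.swap x y) else 0) else 0) +
       (if i = y then (if j = x then f (Equiv.swap x y) else 0) else 0) := by
      intro i j
      grind
    simp only [h4, Finset.sum_add_distrib]
    have h5 : ∀ x y i : Fin d, ∀ r : ℝ, (∑ j, if i = x then (if j = y then r else 0) else 0) =
      if i = x then r else 0 := by
      intro x y i r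
      split_ifs <;> simp
    simp only [h5]
    simp
    ring
  · rw [if_neg hτ, mul_zero]
    symm
    refine Finset.sum_eq_zero fun i _ => Finset.sum_eq_zero fun j _ => ?_
    rw [if_neg]
    rintro ⟨h1, h2⟩
    exact hτ ⟨i, j, h1, h2⟩

open Classical in
lemma sum_swaps_op :
    (2 : ℝ) • ∑ τ : Equiv.Perm (Fin d), (if τ.IsSwap then opA τ else 0) =
      ∑ a, ∑ b, opS a b := by
  apply LinearMap.ext; intro F; funext w
  have h := sum_swaps (fun τ => F (w ∘ τ))
  simp only [LinearMap.smul_apply, LinearMap.sum_apply, Finset.sum_apply, Pi.smul_apply,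
    smul_eq_mul]
  have h1 : ∀ τ : Equiv.Perm (Fin d), (if τ.IsSwap then opA τ else 0) F w =
      if τ.IsSwap then F (w ∘ τ) else 0 := by
    intro τ
    split_ifs <;> rfl
  simp only [h1, h]
  have h2 : ∀ a b, opS a b F w =
    ∑ i, ∑ j, if w i = a ∧ w j = b ∧ i ≠ j then F (w ∘ Equiv.swap i j) else 0 := fun _ _ => rfl
  simp only [h2]
  have h3 : ∀ a, (∑ b, ∑ i, ∑ j, if w i = a ∧ w j = b ∧ i ≠ j then F (w ∘ Equiv.swap i j) else 0) =
     ∑ i, ∑ j, if w i = a ∧ i ≠ j then F (w ∘ Equiv.swap i j) else 0 := by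
    intro a
    rw [Finset.sum_comm]
    refine Finset.sum_congr rfl fun i _ => ?_
    rw [Finset.sum_comm]
    refine Finset.sum_congr rfl fun j _ => ?_
    rw [Finset.sum_eq_single (w j)]
    · simp
    · intro b _ hb
      rw [if_neg]
      rintro ⟨_, h, _⟩
      exact hb h.symm
    · simp
  simp only [h3]
  symm
  rw [Finset.sum_comm]
  refine Finset.sum_congr rfl fun i _ => ?_
  rw [Finset.sum_comm]
  refine Finset.sum_congr rfl fun j _ => ?_
  rw [Finset.sum_eq_single (w i)]
  · simp
  · intro b _ hb
    rw [if_neg]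
    rintro ⟨h, _⟩
    exact hb h.symm
  · simp

/-- Sum of squares of a weight. -/
def sq (μ : Fin d → ℕ) : ℕ := ∑ a, μ a ^ 2

/-- Span of characters of larger weights. -/
def upSpan (d : ℕ) (s D : ℕ) : Submodule ℝ (Equiv.Perm (Fin d) → ℝ) :=
  Submodule.span ℝ (chi '' {ν : Fin d → ℕ | s < sq ν ∧ ∑ a, ν a = D})

/-- Auxiliary trace. -/
def uu (a b : Fin d) (μ : Fin d → ℕ) (σ : Equiv.Perm (Fin d)) : ℝ :=
  LinearMap.trace ℝ (Word d → ℝ) (opP μ * (opE b a * opE a b) * opA σ)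

lemma uu_step (a b : Fin d) (hab : a ≠ b) (μ : Fin d → ℕ) :
    uu a b (μ + Pi.single b 1) = uu a b (μ + Pi.single a 1) +
      ((μ a : ℝ) + 1 - μ b) • chi (μ + Pi.single a 1) := by
  funext σ
  set ν := μ + Pi.single a 1 with hν
  have e1 : opP (μ + Pi.single b 1) * (opE b a * opE a b) * opA σ =
      opE b a * (opP ν * opE a b * opA σ) := by
    rw [← mul_assoc, opP_opE]; simp only [mul_assoc, hν]
  have e2 : opP ν * opE a b * opA σ * opE b a = opP ν * (opE a b * opE b a) * opA σ := by
    simp only [mul_assoc]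
    rw [opE_opA]
  have e3 : opE a b * opE b a = opE b a * opE a b + (opN a - opN b) := by
    rw [opE_opE a b hab, opE_opE b a hab.symm, opS_symm a b]; abel
  have ha : (ν a : ℝ) = μ a + 1 := by simp [hν]
  have hb : (ν b : ℝ) = μ b := by simp [hν, hab.symm]
  simp only [uu, chi, Pi.add_apply, Pi.smul_apply]
  rw [e1, LinearMap.trace_mul_comm, e2, e3, mul_add, add_mul, map_add, mul_sub, opP_opN, opP_opN,
    ha, hb, sub_mul, smul_mul_assoc, smul_mul_assoc, map_sub, map_smul, map_smul, ← sub_smul]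

lemma sq_step (a b : Fin d) (μ : Fin d → ℕ) (h : μ b + 1 ≤ μ a) :
    sq (μ + Pi.single b 1) < sq (μ + Pi.single a 1) := by
  have key : ∀ c : Fin d, sq (μ + Pi.single c 1) = sq μ + 2 * μ c + 1 := by
    intro c
    have : ∀ e, (μ + Pi.single c 1 : Fin d → ℕ) e ^ 2 = μ e ^ 2 + if e = c then 2 * μ c + 1 else 0 := by
      intro e
      by_cases he : e = c
      · subst he; simp; ring
      · simp [he]
    simp only [sq, this, Finset.sum_add_distrib]
    simp; ring
  rw [key, key]; omega

lemma sum_step (a : Fin d) (μ : Fin d → ℕ) : ∑ e, (μ + Pi.single a 1 : Fin d → ℕ) e = ∑ e, μ e + 1 := by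
  simp [Finset.sum_add_distrib]

lemma uu_mem (a b : Fin d) (hab : a ≠ b) (s D k : ℕ) : ∀ μ : Fin d → ℕ, μ b = k → μ b ≤ μ a →
    ∑ e, μ e = D → s ≤ sq μ → uu a b μ ∈ upSpan d s D := by
  induction k with
  | zero =>
    intro μ hk _ _ _
    have : uu a b μ = 0 := by
      funext σ
      simp only [uu]
      rw [← mul_assoc, opP_opE_zero μ a b hk]; simp
    rw [this]; exact Submodule.zero_mem _
  | succ k ih =>
    intro μ hk hle hD hs
    obtain ⟨μ', rfl⟩ : ∃ μ' : Fin d → ℕ, μ = μ' + Pi.single b 1 := by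
      refine ⟨fun e => if e = b then μ e - 1 else μ e, ?_⟩
      funext e
      by_cases he : e = b
      · subst he; simp [hk]
      · simp [he]
    have hb : μ' b = k := by simpa using hk
    have ha : (μ' + Pi.single b 1 : Fin d → ℕ) a = μ' a := by simp [hab]
    have hlt : μ' b + 1 ≤ μ' a := by rw [ha] at hle; simpa using hle
    have hsq := sq_step a b μ' hlt
    have hD' : ∑ e, (μ' + Pi.single a 1 : Fin d → ℕ) e = D := by rw [sum_step, ← hD, sum_step]
    rw [uu_step a b hab]
    refine Submodule.add_mem _ (ih _ ?_ ?_ hD' (by omega)) (Submodule.smul_mem _ _ ?_)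
    · simp [hab.symm, hb]
    · simp [hab.symm]; omega
    · exact Submodule.subset_span ⟨_, ⟨by omega, hD'⟩, rfl⟩

/-- Trace with the partial swap operator. -/
def ss (a b : Fin d) (μ : Fin d → ℕ) (σ : Equiv.Perm (Fin d)) : ℝ :=
  LinearMap.trace ℝ (Word d → ℝ) (opP μ * opS a b * opA σ)

lemma ss_eq (a b : Fin d) (hab : a ≠ b) (μ : Fin d → ℕ) :
    ss a b μ = uu a b μ - (μ b : ℝ) • chi μ := by
  funext σ
  have h := opE_opE b a hab.symm
  have h' : opS a b = opE b a * opE a b - opN b := by rw [h, opS_symm]; abel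
  simp only [ss, uu, chi, Pi.sub_apply, Pi.smul_apply]
  rw [h', mul_sub, sub_mul, map_sub, opP_opN, smul_mul_assoc, map_smul]

lemma ss_symm (a b : Fin d) (μ : Fin d → ℕ) : ss a b μ = ss b a μ := by
  funext σ; simp only [ss, opS_symm a b]

/-- twice the matrix entry -/
def ent (μ : Fin d → ℕ) (a b : Fin d) : ℝ :=
  if a = b then (μ a : ℝ) * ((μ a : ℝ) - 1) else - (min (μ a) (μ b) : ℕ)

lemma ss_mem (a b : Fin d) (μ : Fin d → ℕ) :
    ss a b μ - ent μ a b • chi μ ∈ upSpan d (sq μ) (∑ e, μ e) := by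
  by_cases hab : a = b
  · subst hab
    have : ss a a μ - ent μ a a • chi μ = 0 := by
      funext σ
      simp only [ss, ent, if_true, chi, Pi.sub_apply, Pi.smul_apply]
      rw [opP_opS_self, smul_mul_assoc, map_smul, sub_self]; rfl
    rw [this]; exact Submodule.zero_mem _
  · rcases le_total (μ b) (μ a) with h | h
    · have : ss a b μ - ent μ a b • chi μ = uu a b μ := by
        rw [ss_eq a b hab, ent, if_neg hab, min_eq_right h]
        simp
      rw [this]
      exact uu_mem a b hab _ _ _ μ rfl h rfl le_rfl
    · have : ss a b μ - ent μ a b • chi μ = uu b a μ := by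
        rw [ss_symm, ss_eq b a (Ne.symm hab), ent, if_neg hab, min_eq_left h]
        simp
      rw [this]
      exact uu_mem b a (Ne.symm hab) _ _ _ μ rfl h rfl le_rfl

open Classical in
lemma chi_swaps (μ : Fin d → ℕ) :
    (fun σ => ∑ τ : Equiv.Perm (Fin d), if τ.IsSwap then chi μ (τ * σ) else 0)
      - ((1/2 : ℝ) * ∑ a, ∑ b, ent μ a b) • chi μ ∈ upSpan d (sq μ) (∑ e, μ e) := by
  have h1 : (fun σ => ∑ τ : Equiv.Perm (Fin d), if τ.IsSwap then chi μ (τ * σ) else 0)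
      = (1/2 : ℝ) • ∑ a, ∑ b, ss a b μ := by
    funext σ
    have e1 : ∀ τ : Equiv.Perm (Fin d), (if τ.IsSwap then chi μ (τ * σ) else 0) =
        LinearMap.trace ℝ (Word d → ℝ) (opP μ * (if τ.IsSwap then opA τ else 0) * opA σ) := by
      intro τ
      split_ifs
      · rw [chi, opA_mul, mul_assoc]
      · simp
    simp only [e1]
    rw [← map_sum, ← Finset.sum_mul, ← Finset.mul_sum]
    have e2 : (∑ τ : Equiv.Perm (Fin d), (if τ.IsSwap then opA τ else 0)) =
      (1/2 : ℝ) • ∑ a, ∑ b, opS (d := d) a b := by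
      rw [← sum_swaps_op, smul_smul]; norm_num
    rw [e2]
    simp only [Pi.smul_apply, Finset.sum_apply, ss]
    simp only [mul_smul_comm, smul_mul_assoc, map_smul, Finset.mul_sum, Finset.sum_mul, map_sum]
  rw [h1]
  have h2 : (1/2 : ℝ) • ∑ a, ∑ b, ss a b μ - ((1/2 : ℝ) * ∑ a, ∑ b, ent μ a b) • chi μ =
     (1/2 : ℝ) • ∑ a, ∑ b, (ss a b μ - ent μ a b • chi μ) := by
    simp only [Finset.sum_sub_distrib, smul_sub, mul_smul, Finset.sum_smul]
  rw [h2]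
  exact Submodule.smul_mem _ _ (Submodule.sum_mem _ fun a _ => Submodule.sum_mem _ fun b _ =>
    ss_mem a b μ)

lemma chi_eq (μ : Fin d → ℕ) (σ : Equiv.Perm (Fin d)) :
    chi μ σ = ∑ w : Word d, if wt w = μ ∧ w ∘ σ = w then 1 else 0 := by
  rw [chi, LinearMap.trace_eq_matrix_trace ℝ (Pi.basisFun ℝ (Word d)), Matrix.trace]
  refine Finset.sum_congr rfl fun w _ => ?_
  rw [Matrix.diag_apply, LinearMap.toMatrix_apply]
  simp only [Pi.basisFun_apply, Pi.basisFun_repr]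
  change (if wt w = μ then (Pi.single w 1 : Word d → ℝ) (w ∘ σ) else 0) = _
  rw [Pi.single_apply]
  by_cases h : wt w = μ <;> simp [h]

lemma wt_comp_perm (w : Word d) (σ : Equiv.Perm (Fin d)) : wt (w ∘ σ) = wt w := by
  funext a
  have key : ∀ v : Word d, wt v a = ∑ j, if v j = a then 1 else 0 := fun v => by
    simp [wt]
  rw [key, key]
  exact Equiv.sum_comp σ (fun j => if w j = a then 1 else 0)

lemma opP_opA (μ : Fin d → ℕ) (σ : Equiv.Perm (Fin d)) : opP μ * opA σ = opA σ * opP μ := by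
  apply LinearMap.ext; intro F; funext w
  change (if wt w = μ then F (w ∘ σ) else 0) = if wt (w ∘ σ) = μ then F (w ∘ σ) else 0
  rw [wt_comp_perm]

lemma chi_conj (μ : Fin d → ℕ) (ρ σ : Equiv.Perm (Fin d)) : chi μ (ρ * σ * ρ⁻¹) = chi μ σ := by
  rw [chi, opA_mul, ← mul_assoc, LinearMap.trace_mul_comm, ← mul_assoc, ← opP_opA, mul_assoc,
    ← opA_mul, chi]
  congr 3
  group

lemma chi_perm (μ : Fin d → ℕ) (π : Equiv.Perm (Fin d)) : chi (μ ∘ π) = chi μ := by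
  funext σ
  rw [chi_eq, chi_eq]
  symm
  rw [← Equiv.sum_comp (Equiv.arrowCongr (Equiv.refl (Fin d)) π)]
  refine Finset.sum_congr rfl fun w _ => ?_
  have e : (Equiv.arrowCongr (Equiv.refl (Fin d)) π) w = π ∘ w := by
    funext i; simp [Equiv.arrowCongr]
  rw [e]
  congr 1
  apply propext
  refine and_congr ?_ ?_
  · have : ∀ a, wt (π ∘ w) (π a) = wt w a := by
      intro a; simp [wt]
    constructor
    · intro h
      funext a
      rw [← this, h]; rfl
    · intro h
      funext a
      have h2 := this (π.symm a)
      rw [h] at h2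
      simpa using h2
  · rw [Function.comp_assoc]
    exact (π.injective.comp_left.eq_iff)

lemma cycleType_of_word (σ : Equiv.Perm (Fin d)) (w : Word d)
    (h : ∀ i j, σ.SameCycle i j ↔ w i = w j) :
    σ.cycleType = (Finset.univ.filter (fun a => 2 ≤ wt w a)).val.map (wt w) := by
  rw [Equiv.Perm.cycleType_def]
  symm
  have hex : ∀ a, a ∈ (Finset.univ.filter (fun a => 2 ≤ wt w a)) →
      ∃ x, w x = a ∧ x ∈ σ.support := by
    intro a ha
    rw [Finset.mem_filter] at ha
    have h2 : 1 < (Finset.univ.filter (fun i => w i = a)).card := ha.2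
    rw [Finset.one_lt_card] at h2
    obtain ⟨x, hx, y, hy, hxy⟩ := h2
    simp only [Finset.mem_filter, Finset.mem_univ, true_and] at hx hy
    refine ⟨x, hx, ?_⟩
    rw [Equiv.Perm.mem_support]
    intro hfix
    have hs : σ.SameCycle x y := (h x y).2 (hx.trans hy.symm)
    exact hxy (hs.eq_of_left hfix)
  choose! x hx hxs using hex
  have hsup : ∀ y ∈ σ.support, (σ.cycleOf y).support = Finset.univ.filter (fun i => w i = w y) := by
    intro y hy
    ext i
    rw [Equiv.Perm.mem_support_cycleOf_iff, h]
    simp only [hy, and_true, Finset.mem_filter, Finset.mem_univ, true_and]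
    exact eq_comm
  refine Multiset.map_eq_map_of_bij_of_nodup _ _ (Finset.nodup _) (Finset.nodup _)
    (fun a _ => σ.cycleOf (x a)) ?_ ?_ ?_ ?_
  · intro a ha
    exact Equiv.Perm.cycleOf_mem_cycleFactorsFinset_iff.2 (hxs a ha)
  · intro a ha b hb hab
    have h1 := hsup (x a) (hxs a ha)
    have h2 := hsup (x b) (hxs b hb)
    rw [hab, h2] at h1
    have : x b ∈ Finset.univ.filter (fun i => w i = w (x b)) := by simp
    rw [h1] at this
    simp only [Finset.mem_filter, Finset.mem_univ, true_and] at this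
    rw [hx a ha, hx b hb] at this
    exact this.symm
  · intro c hc
    have hc' : c ∈ σ.cycleFactorsFinset := hc
    obtain ⟨y, hy⟩ := (Equiv.Perm.mem_cycleFactorsFinset_iff.1 hc').1.nonempty_support
    have hce := Equiv.Perm.cycle_is_cycleOf hy hc'
    have hys : y ∈ σ.support := Equiv.Perm.mem_cycleFactorsFinset_support_le hc' hy
    have hcard : 2 ≤ wt w (w y) := by
      have := (Equiv.Perm.mem_cycleFactorsFinset_iff.1 hc').1.two_le_card_support
      rwa [hce, hsup y hys] at this
    have hm : w y ∈ Finset.univ.filter (fun a => 2 ≤ wt w a) := by simpa using hcard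
    refine ⟨w y, hm, ?_⟩
    rw [hce]
    have : σ.SameCycle (x (w y)) y := (h _ _).2 (hx _ hm)
    exact this.cycleOf_eq
  · intro a ha
    simp only [Function.comp]
    rw [hsup _ (hxs a ha), hx a ha]
    rfl

/-- Number of cycles. -/
def ncyc (σ : Equiv.Perm (Fin d)) : ℕ := Nat.card (Quotient (Equiv.Perm.SameCycle.setoid σ))

lemma comp_sameCycle (σ : Equiv.Perm (Fin d)) (w : Word d) (h : w ∘ σ = w) {i j : Fin d}
    (hij : σ.SameCycle i j) : w i = w j := by
  obtain ⟨k, rfl⟩ := hij.exists_pow_eq'' |>.imp fun k hk => hk.2.2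
  induction k with
  | zero => simp
  | succ k ih =>
    rw [ih (by exact ⟨k, by simp⟩), pow_succ', Equiv.Perm.mul_apply]
    exact (congrFun h ((σ ^ k) i)).symm

open Classical in
lemma range_card_le (σ : Equiv.Perm (Fin d)) (w : Word d) (h : w ∘ σ = w) :
    (Finset.univ.image w).card ≤ ncyc σ ∧ (ncyc σ ≤ (Finset.univ.image w).card →
      ∀ i j, σ.SameCycle i j ↔ w i = w j) := by
  let L : Quotient (Equiv.Perm.SameCycle.setoid σ) → Fin d :=
    Quotient.lift w (fun i j hij => comp_sameCycle σ w h hij)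
  have him : Finset.univ.image w = Finset.univ.image L := by
    ext a
    simp only [Finset.mem_image, Finset.mem_univ, true_and]
    constructor
    · rintro ⟨i, hi⟩
      exact ⟨Quotient.mk _ i, hi⟩
    · rintro ⟨q, hq⟩
      induction q using Quotient.inductionOn with
      | h i => exact ⟨i, hq⟩
  rw [him, ncyc, Nat.card_eq_fintype_card]
  refine ⟨Finset.card_image_le, fun hle i j => ⟨fun hs => comp_sameCycle σ w h hs, fun hw => ?_⟩⟩
  have hinj := Finset.card_image_iff.1 (le_antisymm Finset.card_image_le hle)
  have : (Quotient.mk (Equiv.Perm.SameCycle.setoid σ) i) = Quotient.mk _ j :=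
    hinj (by simp) (by simp) hw
  exact Quotient.exact this

lemma exists_word (σ : Equiv.Perm (Fin d)) : ∃ w : Word d, ∀ i j, σ.SameCycle i j ↔ w i = w j := by
  refine ⟨fun i => (Quotient.mk (Equiv.Perm.SameCycle.setoid σ) i).out, fun i j => ?_⟩
  rw [Quotient.out_inj]
  exact ⟨fun h => Quotient.sound h, fun h => Quotient.exact h⟩

open Classical in
lemma ncyc_eq (σ : Equiv.Perm (Fin d)) (w : Word d) (h : ∀ i j, σ.SameCycle i j ↔ w i = w j) :
    ncyc σ = (Finset.univ.image w).card := by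
  let L : Quotient (Equiv.Perm.SameCycle.setoid σ) → Fin d :=
    Quotient.lift w (fun i j hij => (h i j).1 hij)
  have him : Finset.univ.image w = Finset.univ.image L := by
    ext a
    simp only [Finset.mem_image, Finset.mem_univ, true_and]
    constructor
    · rintro ⟨i, hi⟩
      exact ⟨Quotient.mk _ i, hi⟩
    · rintro ⟨q, hq⟩
      induction q using Quotient.inductionOn with
      | h i => exact ⟨i, hq⟩
  rw [him, ncyc, Nat.card_eq_fintype_card, Finset.card_image_of_injective]
  · rfl
  · intro p q
    induction p using Quotient.inductionOn with
    | h i =>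
    induction q using Quotient.inductionOn with
    | h j => exact fun hp => Quotient.sound ((h i j).2 hp)

lemma image_eq (w : Word d) : Finset.univ.image w = Finset.univ.filter (fun a => wt w a ≠ 0) := by
  ext a
  simp [wt, Finset.filter_eq_empty_iff]

lemma sum_wt (w : Word d) : ∑ a, wt w a = d := by
  have := Finset.card_eq_sum_card_fiberwise (f := w) (s := Finset.univ) (t := Finset.univ) (by simp)
  simpa [wt] using this.symm

lemma chi_inj (f : Equiv.Perm (Fin d) → ℝ) (hf : ∀ ρ σ, f (ρ * σ * ρ⁻¹) = f σ)
    (h0 : ∀ μ : Fin d → ℕ, ∑ a, μ a = d → ∑ σ, f σ * chi μ σ = 0) : f = 0 := by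
  classical
  by_contra hne
  have hex : (Finset.univ.filter (fun σ => f σ ≠ 0)).Nonempty := by
    by_contra hcon
    rw [Finset.not_nonempty_iff_eq_empty, Finset.filter_eq_empty_iff] at hcon
    exact hne (funext fun σ => by simpa using hcon (Finset.mem_univ σ))
  obtain ⟨σ, hσ, hmax⟩ := Finset.exists_max_image _ ncyc hex
  simp only [Finset.mem_filter, Finset.mem_univ, true_and] at hσ hmax
  obtain ⟨w, hw⟩ := exists_word σ
  have hww : w ∘ σ = w := by
    funext i
    exact ((hw i (σ i)).1 ⟨1, by simp⟩).symm
  have key : ∀ σ' w', f σ' * (if wt w' = wt w ∧ w' ∘ σ' = w' then 1 else 0) =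
      f σ * (if f σ' ≠ 0 ∧ wt w' = wt w ∧ w' ∘ σ' = w' then 1 else 0) := by
    intro σ' w'
    by_cases h1 : f σ' = 0
    · simp [h1]
    by_cases h2 : wt w' = wt w ∧ w' ∘ σ' = w'
    · simp only [h2, h1, and_self, ne_eq, not_false_eq_true, if_true, mul_one]
      have hle := hmax σ' h1
      rw [ncyc_eq σ w hw, image_eq, ← h2.1, ← image_eq] at hle
      have hw' := (range_card_le σ' w' h2.2).2 hle
      have hc : σ'.cycleType = σ.cycleType := by
        rw [cycleType_of_word σ' w' hw', cycleType_of_word σ w hw, h2.1]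
      obtain ⟨ρ, hρ⟩ := isConj_iff.1 (Equiv.Perm.isConj_iff_cycleType_eq.2 hc)
      rw [← hρ, hf]
    · simp [h2]
  have h := h0 (wt w) (sum_wt w)
  simp only [chi_eq, Finset.mul_sum, key] at h
  simp only [← Finset.mul_sum] at h
  rcases mul_eq_zero.1 h with h | h
  · exact hσ h
  · have hnn : ∀ σ' : Equiv.Perm (Fin d), ∀ w' : Word d, (0:ℝ) ≤
        (if f σ' ≠ 0 ∧ wt w' = wt w ∧ w' ∘ σ' = w' then 1 else 0) := by
      intro σ' w'; split_ifs <;> norm_num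
    have h1 := (Finset.sum_eq_zero_iff_of_nonneg
      (fun σ' _ => Finset.sum_nonneg fun w' _ => hnn σ' w')).1 h σ (Finset.mem_univ _)
    have h2 := (Finset.sum_eq_zero_iff_of_nonneg (fun w' _ => hnn σ w')).1 h1 w (Finset.mem_univ _)
    simp [hσ, hww] at h2

/-- Young diagrams of size `d`. -/
abbrev YD (d : ℕ) := {lam : YoungDiagram // lam.card = d}

lemma sum_cells_eq (lam : YoungDiagram) (n : ℕ) (hn : ∀ c ∈ lam.cells, c.1 < n) (f : ℕ × ℕ → ℝ) :
    ∑ c ∈ lam.cells, f c = ∑ i ∈ Finset.range n, ∑ j ∈ Finset.range (lam.rowLen i), f (i, j) := by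
  rw [← Finset.sum_fiberwise_of_maps_to (t := Finset.range n) (g := Prod.fst)
    (fun c hc => Finset.mem_range.2 (hn c hc))]
  refine Finset.sum_congr rfl fun i _ => ?_
  have : lam.cells.filter (fun c => c.1 = i) = lam.row i := rfl
  rw [this, YoungDiagram.row_eq_prod, Finset.sum_product]
  simp

lemma cell_lt_colLen (lam : YoungDiagram) (c : ℕ × ℕ) (hc : c ∈ lam.cells) :
    c.1 < lam.colLen 0 := by
  rw [← YoungDiagram.mem_iff_lt_colLen]
  exact lam.up_left_mem le_rfl (Nat.zero_le c.2) hc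

lemma colLen_le_card (lam : YoungDiagram) : lam.colLen 0 ≤ lam.card := by
  rw [YoungDiagram.colLen_eq_card]
  exact Finset.card_le_card (Finset.filter_subset _ _)

lemma cell_lt (lam : YD d) (c : ℕ × ℕ) (hc : c ∈ lam.1.cells) : c.1 < d :=
  lt_of_lt_of_le (cell_lt_colLen lam.1 c hc) ((colLen_le_card lam.1).trans lam.2.le)

/-- Row lengths. -/
def rows (lam : YD d) (i : Fin d) : ℕ := lam.1.rowLen i

lemma sum_cells_rows (lam : YD d) (f : ℕ × ℕ → ℝ) :
    ∑ c ∈ lam.1.cells, f c = ∑ i : Fin d, ∑ j ∈ Finset.range (rows lam i), f (i, j) := by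
  rw [sum_cells_eq lam.1 d (cell_lt lam), Finset.sum_range]
  rfl

lemma sum_rows (lam : YD d) : ∑ i, rows lam i = d := by
  have h := sum_cells_rows lam (fun _ => 1)
  have h2 : (lam.1.cells.card : ℝ) = d := by exact_mod_cast lam.2
  simp at h
  rw [h2] at h
  exact_mod_cast h.symm

lemma ent_sum (lam : YD d) :
    (1/2 : ℝ) * ∑ a, ∑ b, ent (rows lam) a b = ∑ c ∈ lam.1.cells, (content c : ℝ) := by
  have hanti : ∀ a b : Fin d, a ≤ b → rows lam b ≤ rows lam a :=
    fun a b h => lam.1.rowLen_anti a b h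
  rw [sum_cells_rows]
  have h1 : ∀ a b : Fin d, ent (rows lam) a b =
      (if a = b then (rows lam a : ℝ) * ((rows lam a : ℝ) - 1) else 0) -
      ((if a < b then (rows lam b : ℝ) else 0) + (if b < a then (rows lam a : ℝ) else 0)) := by
    intro a b
    rw [ent]
    rcases lt_trichotomy a b with h | h | h
    · simp [h, h.ne, h.not_gt, min_eq_right (hanti a b h.le)]
    · simp [h]
    · simp [h, h.ne', h.not_gt, min_eq_left (hanti b a h.le)]
  have h2 : ∑ a, ∑ b, (if a < b then (rows lam b : ℝ) else 0) =
      ∑ a : Fin d, ((a : ℕ) : ℝ) * rows lam a := by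
    rw [Finset.sum_comm]
    refine Finset.sum_congr rfl fun b _ => ?_
    rw [← Finset.sum_filter, Finset.sum_const, nsmul_eq_mul]
    congr 2
    have : (Finset.univ.filter (fun a => a < b)) = Finset.Iio b := by ext; simp
    rw [this, Fin.card_Iio]
  have h3 : ∑ a, ∑ b, (if b < a then (rows lam a : ℝ) else 0) =
      ∑ a : Fin d, ((a : ℕ) : ℝ) * rows lam a := by
    rw [← h2, Finset.sum_comm]
  simp only [h1, Finset.sum_sub_distrib, Finset.sum_add_distrib, h2, h3]
  simp only [Finset.sum_ite_eq, Finset.mem_univ, if_true]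
  rw [← Finset.sum_add_distrib, ← Finset.sum_sub_distrib, Finset.mul_sum]
  refine Finset.sum_congr rfl fun i _ => ?_
  simp only [content]
  generalize rows lam i = m
  induction m with
  | zero => simp
  | succ m ih =>
    rw [Finset.sum_range_succ, ← ih]
    push_cast
    ring

lemma exists_sort (μ : Fin d → ℕ) (hμ : ∑ a, μ a = d) :
    ∃ (lam : YD d) (π : Equiv.Perm (Fin d)), rows lam = μ ∘ π := by
  let π : Equiv.Perm (Fin d) := Tuple.sort (fun i => OrderDual.toDual (μ i))
  have hm : ∀ a b : Fin d, a ≤ b → μ (π b) ≤ μ (π a) := fun a b h =>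
    Tuple.monotone_sort (fun i => OrderDual.toDual (μ i)) h
  let lam : YoungDiagram :=
    { cells := Finset.univ.biUnion (fun i : Fin d =>
        (Finset.range (μ (π i))).image (fun j => ((i : ℕ), j)))
      isLowerSet := by
        rintro ⟨i, j⟩ ⟨i', j'⟩ hle hmem
        simp only [Finset.coe_biUnion, Finset.mem_coe, Finset.mem_univ, Set.iUnion_true,
          Finset.coe_image, Set.mem_iUnion, Set.mem_image, Finset.mem_range, Prod.mk.injEq] at hmem ⊢
        obtain ⟨k, l, hl, rfl, rfl⟩ := hmem
        have h1 : i' ≤ k := hle.1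
        have h2 : j' ≤ l := hle.2
        refine ⟨⟨i', by omega⟩, j', ?_, rfl, rfl⟩
        have := hm ⟨i', by omega⟩ k h1
        omega }
  have hmem : ∀ (i : Fin d) (j : ℕ), ((i : ℕ), j) ∈ lam ↔ j < μ (π i) := by
    intro i j
    rw [← YoungDiagram.mem_cells]
    simp only [lam, Finset.mem_biUnion, Finset.mem_univ, true_and, Finset.mem_image,
      Finset.mem_range, Prod.mk.injEq]
    constructor
    · rintro ⟨k, l, hl, hk, rfl⟩
      rwa [← Fin.ext hk]
    · intro h
      exact ⟨i, j, h, rfl, rfl⟩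
  have hrow : ∀ i : Fin d, lam.rowLen i = μ (π i) := by
    intro i
    apply le_antisymm
    · by_contra hcon
      push Not at hcon
      have := (hmem i _).1 (YoungDiagram.mem_iff_lt_rowLen.2 hcon)
      omega
    · by_contra hcon
      push Not at hcon
      have := YoungDiagram.mem_iff_lt_rowLen.1 ((hmem i _).2 hcon)
      omega
  have hlt : ∀ c ∈ lam.cells, c.1 < d := by
    intro c hc
    simp only [lam, Finset.mem_biUnion, Finset.mem_univ, true_and, Finset.mem_image] at hc
    obtain ⟨k, l, _, rfl⟩ := hc
    exact k.2
  have hcard : lam.card = d := by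
    have h := sum_cells_eq lam d hlt (fun _ => 1)
    rw [Finset.sum_range] at h
    simp only [hrow] at h
    simp at h
    have h2 : ∑ i, μ (π i) = d := by rw [Equiv.sum_comp π]; exact hμ
    have h3 : (lam.cells.card : ℝ) = d := by
      rw [h]; exact_mod_cast h2
    exact_mod_cast h3
  exact ⟨⟨lam, hcard⟩, π, funext hrow⟩

lemma sq_perm (μ : Fin d → ℕ) (π : Equiv.Perm (Fin d)) : sq (μ ∘ π) = sq μ :=
  Equiv.sum_comp π (fun a => μ a ^ 2)

/-- The partition of a Young diagram. -/
def toPart (lam : YD d) : Nat.Partition d where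
  parts := (lam.1.rowLens : Multiset ℕ)
  parts_pos := fun {i} hi => lam.1.pos_of_mem_rowLens i (by simpa using hi)
  parts_sum := by
    have h := sum_cells_eq lam.1 (lam.1.colLen 0) (cell_lt_colLen lam.1) (fun _ => 1)
    have h2 : (lam.1.cells.card : ℝ) = d := by exact_mod_cast lam.2
    simp at h
    rw [h2] at h
    have h3 : ∑ i ∈ Finset.range (lam.1.colLen 0), lam.1.rowLen i = d := by exact_mod_cast h.symm
    rw [Multiset.sum_coe, YoungDiagram.rowLens]
    exact h3

lemma toPart_inj : Function.Injective (toPart (d := d)) := by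
  intro lam lam' h
  have h1 : (lam.1.rowLens : Multiset ℕ) = lam'.1.rowLens := congrArg Nat.Partition.parts h
  rw [Multiset.coe_eq_coe] at h1
  have h2 : lam.1.rowLens = lam'.1.rowLens := 
    h1.eq_of_sortedGE lam.1.rowLens_sorted lam'.1.rowLens_sorted
  apply Subtype.ext
  apply YoungDiagram.equivListRowLens.injective
  exact Subtype.ext h2

instance : Finite (YD d) := Finite.of_injective _ toPart_inj

lemma part_ext (p q : Nat.Partition d)
    (h : p.parts.filter (fun n => 2 ≤ n) = q.parts.filter (fun n => 2 ≤ n)) : p = q := by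
  have key : ∀ r : Nat.Partition d, r.parts = r.parts.filter (fun n => 2 ≤ n) +
      Multiset.replicate (d - (r.parts.filter (fun n => 2 ≤ n)).sum) 1 := by
    intro r
    have h1 := Multiset.filter_add_not (fun n => 2 ≤ n) r.parts
    have h2 : r.parts.filter (fun n => ¬ 2 ≤ n) =
      Multiset.replicate (r.parts.filter (fun n => ¬ 2 ≤ n)).card 1 := by
      rw [Multiset.eq_replicate_card]
      intro b hb
      rw [Multiset.mem_filter] at hb
      have := r.parts_pos hb.1
      omega
    have h3 : (r.parts.filter (fun n => 2 ≤ n)).sum + (r.parts.filter (fun n => ¬ 2 ≤ n)).card = d := by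
      have := congrArg Multiset.sum h1
      rw [Multiset.sum_add, r.parts_sum] at this
      rw [h2] at this
      simpa using this
    have h4 : d - (r.parts.filter (fun n => 2 ≤ n)).sum =
      (r.parts.filter (fun n => ¬ 2 ≤ n)).card := by omega
    rw [h4, ← h2, h1]
  apply Nat.Partition.ext
  rw [key p, key q, h]

lemma card_YD_le : Nat.card (YD d) ≤ Nat.card (ConjClasses (Equiv.Perm (Fin d))) := by
  have hex : ∀ p : Nat.Partition d, ∃ σ : Equiv.Perm (Fin d),
      σ.cycleType = p.parts.filter (fun n => 2 ≤ n) := by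
    intro p
    rw [Equiv.Perm.exists_with_cycleType_iff]
    constructor
    · rw [Fintype.card_fin]
      have h1 := congrArg Multiset.sum (Multiset.filter_add_not (fun n => 2 ≤ n) p.parts)
      rw [Multiset.sum_add, p.parts_sum] at h1
      omega
    · intro a ha
      exact (Multiset.mem_filter.1 ha).2
  choose s hs using hex
  refine Nat.card_le_card_of_injective
    (fun lam : YD d => ConjClasses.mk (s (toPart lam))) ?_
  intro lam lam' h
  apply toPart_inj
  apply part_ext
  rw [← hs, ← hs]
  exact Equiv.Perm.isConj_iff_cycleType_eq.1 (ConjClasses.mk_eq_mk_iff_isConj.1 h)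

lemma upSpan_le (s : ℕ) : upSpan d s d ≤
    Submodule.span ℝ ((fun lam : YD d => chi (rows lam)) '' {lam | s < sq (rows lam)}) := by
  rw [upSpan, Submodule.span_le]
  rintro _ ⟨ν, ⟨h1, h2⟩, rfl⟩
  obtain ⟨lam, π, h⟩ := exists_sort ν h2
  refine Submodule.subset_span ⟨lam, ?_, ?_⟩
  · simp only [Set.mem_ofPred_eq, h, sq_perm]; exact h1
  · simp only [h, chi_perm]

open Classical in
lemma exists_coeffs [Fintype (YD d)] (lam : YD d) : ∃ m : YD d → ℝ,
    (∀ ν, m ν ≠ 0 → sq (rows lam) < sq (rows ν)) ∧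
    ∀ σ : Equiv.Perm (Fin d),
      (∑ τ : Equiv.Perm (Fin d), if τ.IsSwap then chi (rows lam) (τ * σ) else 0) =
      (∑ c ∈ lam.1.cells, (content c : ℝ)) * chi (rows lam) σ + ∑ ν, m ν * chi (rows ν) σ := by
  have h := chi_swaps (rows lam)
  rw [sum_rows, ent_sum] at h
  have h2 := upSpan_le _ h
  rw [Finsupp.mem_span_image_iff_linearCombination] at h2
  obtain ⟨l, hl, hsum⟩ := h2
  refine ⟨l, fun ν hν => ?_, fun σ => ?_⟩
  · rw [Finsupp.mem_supported] at hl
    exact hl (by simpa using hν)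
  · have h3 := congrFun hsum σ
    rw [Finsupp.linearCombination_apply, Finsupp.sum_fintype _ _ (by simp)] at h3
    simp only [Finset.sum_apply, Pi.smul_apply, smul_eq_mul, Pi.sub_apply] at h3
    rw [h3]; ring

lemma tri_pow {ι : Type*} [Fintype ι] [DecidableEq ι] (M : Matrix ι ι ℝ) (s : ι → ℕ)
    (hM : ∀ i j, M i j ≠ 0 → i = j ∨ s i < s j) (n : ℕ) :
    (∀ i j, (M ^ n) i j ≠ 0 → i = j ∨ s i < s j) ∧ ∀ i, (M ^ n) i i = M i i ^ n := by
  induction n with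
  | zero =>
    refine ⟨fun i j h => ?_, fun i => by simp⟩
    left
    by_contra hij
    simp [hij] at h
  | succ n ih =>
    obtain ⟨ih1, ih2⟩ := ih
    refine ⟨fun i j h => ?_, fun i => ?_⟩
    · rw [pow_succ, Matrix.mul_apply] at h
      obtain ⟨k, _, hk⟩ := Finset.exists_ne_zero_of_sum_ne_zero h
      rcases ih1 i k (left_ne_zero_of_mul hk) with h1 | h1 <;>
      rcases hM k j (right_ne_zero_of_mul hk) with h2 | h2
      · left; rw [h1, h2]
      · right; rw [h1]; exact h2
      · right; rw [← h2]; exact h1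
      · right; omega
    · rw [pow_succ, Matrix.mul_apply, Finset.sum_eq_single i, ih2, pow_succ]
      · intro k _ hk
        by_contra hne
        rcases ih1 i k (left_ne_zero_of_mul hne) with h1 | h1
        · exact hk h1.symm
        · rcases hM k i (right_ne_zero_of_mul hne) with h2 | h2
          · exact hk h2
          · omega
      · simp

open Classical in
/-- Multiplication by the sum of transpositions. -/
def matL (d : ℕ) : Matrix (Equiv.Perm (Fin d)) (Equiv.Perm (Fin d)) ℝ :=
  fun σ ρ => if (ρ * σ⁻¹).IsSwap then 1 else 0

open Classical in
/-- Sum over conjugations. -/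
def matR (d : ℕ) : Matrix (Equiv.Perm (Fin d)) (Equiv.Perm (Fin d)) ℝ :=
  fun σ ρ => ∑ π : Equiv.Perm (Fin d), if π * σ * π⁻¹ = ρ then 1 else 0

/-- The character matrix. -/
def matX (d : ℕ) : Matrix (YD d) (Equiv.Perm (Fin d)) ℝ := fun lam σ => chi (rows lam) σ

open Classical in
lemma matL_pow (n : ℕ) : ∀ σ ρ : Equiv.Perm (Fin d), (matL d ^ n) σ ρ =
    ∑ t : Fin n → Equiv.Perm (Fin d),
      if (∀ i, (t i).IsSwap) ∧ (List.ofFn t).prod * σ = ρ then 1 else 0 := by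
  induction n with
  | zero =>
    intro σ ρ
    simp [Matrix.one_apply]
  | succ n ih =>
    intro σ ρ
    rw [pow_succ, Matrix.mul_apply, ← Equiv.sum_comp (Fin.consEquiv (fun _ => Equiv.Perm (Fin d))),
      Fintype.sum_prod_type, Finset.sum_comm]
    simp only [ih, Finset.sum_mul]
    rw [Finset.sum_comm]
    refine Finset.sum_congr rfl fun t _ => ?_
    rw [Finset.sum_eq_single ((List.ofFn t).prod * σ)]
    · rw [Finset.sum_eq_single (ρ * ((List.ofFn t).prod * σ)⁻¹)]
      · simp only [Fin.consEquiv, Equiv.coe_fn_mk, List.ofFn_succ, Fin.cons_zero, Fin.cons_succ,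
          List.prod_cons, Fin.forall_fin_succ, matL]
        by_cases h1 : ∀ i, (t i).IsSwap <;>
          by_cases h2 : (ρ * ((List.ofFn t).prod * σ)⁻¹).IsSwap <;> simp [h1, mul_assoc]
      · intro τ _ hτ
        rw [if_neg]
        rintro ⟨_, h⟩
        apply hτ
        rw [← h]
        simp [Fin.consEquiv, List.ofFn_succ, mul_assoc]
      · simp
    · intro κ _ hκ
      rw [if_neg, zero_mul]
      rintro ⟨_, h⟩
      exact hκ h.symm
    · simp

lemma matX_matR : matX d * matR d = (d.factorial : ℝ) • matX d := by
  classical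
  ext lam ρ
  rw [Matrix.mul_apply]
  simp only [matR, Finset.mul_sum, Matrix.smul_apply]
  rw [Finset.sum_comm]
  have : ∀ π : Equiv.Perm (Fin d), ∑ σ, matX d lam σ * (if π * σ * π⁻¹ = ρ then 1 else 0) =
      matX d lam ρ := by
    intro π
    rw [Finset.sum_eq_single (π⁻¹ * ρ * π)]
    · rw [if_pos (by group), mul_one]
      have := chi_conj (rows lam) π⁻¹ ρ
      rw [inv_inv] at this
      exact this
    · intro σ _ hσ
      rw [if_neg, mul_zero]
      rintro rfl
      exact hσ (by group)
    · simp
  simp only [this]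
  simp [Fintype.card_perm]

lemma matR_conj (ρ σ κ : Equiv.Perm (Fin d)) : matR d (ρ * σ * ρ⁻¹) κ = matR d σ κ := by
  classical
  simp only [matR]
  rw [← Equiv.sum_comp (Equiv.mulRight ρ⁻¹)]
  refine Finset.sum_congr rfl fun π _ => ?_
  congr 2
  simp [mul_assoc]

lemma chi_inj' (f : Equiv.Perm (Fin d) → ℝ) (hf : ∀ ρ σ, f (ρ * σ * ρ⁻¹) = f σ)
    (h0 : ∀ lam : YD d, ∑ σ, matX d lam σ * f σ = 0) : f = 0 := by
  refine chi_inj f hf fun μ hμ => ?_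
  obtain ⟨lam, π, h⟩ := exists_sort μ hμ
  have h1 := h0 lam
  simp only [matX, h, chi_perm] at h1
  rw [← h1]
  exact Finset.sum_congr rfl fun σ _ => mul_comm _ _

lemma exists_inverse [Fintype (YD d)] [DecidableEq (YD d)] :
    ∃ Ψ : Matrix (Equiv.Perm (Fin d)) (YD d) ℝ,
    matX d * Ψ = 1 ∧ (d.factorial : ℝ) • (Ψ * matX d) = matR d := by
  classical
  let T : (ConjClasses (Equiv.Perm (Fin d)) → ℝ) →ₗ[ℝ] (YD d → ℝ) :=
    (Matrix.mulVecLin (matX d)) ∘ₗ (LinearMap.funLeft ℝ ℝ ConjClasses.mk)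
  have hT : ∀ g lam, T g lam = ∑ σ, matX d lam σ * g (ConjClasses.mk σ) := fun g lam => rfl
  have hcl : ∀ (g : ConjClasses (Equiv.Perm (Fin d)) → ℝ) (ρ σ : Equiv.Perm (Fin d)),
      g (ConjClasses.mk (ρ * σ * ρ⁻¹)) = g (ConjClasses.mk σ) := by
    intro g ρ σ
    congr 1
    exact ConjClasses.mk_eq_mk_iff_isConj.2 (isConj_iff.2 ⟨ρ, rfl⟩).symm
  have hinj : Function.Injective T := by
    rw [← LinearMap.ker_eq_bot, LinearMap.ker_eq_bot']
    intro g hg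
    have h1 := chi_inj' (fun σ => g (ConjClasses.mk σ)) (hcl g) (fun lam => by
      rw [← hT, hg]; rfl)
    funext c
    obtain ⟨σ, rfl⟩ := ConjClasses.mk_surjective c
    exact congrFun h1 σ
  have hle := LinearMap.finrank_le_finrank_of_injective hinj
  have hge := card_YD_le (d := d)
  rw [Module.finrank_fintype_fun_eq_card, Module.finrank_fintype_fun_eq_card] at hle
  rw [Nat.card_eq_fintype_card, Nat.card_eq_fintype_card] at hge
  have hsurj : Function.Surjective T := by
    refine (LinearMap.injective_iff_surjective_of_finrank_eq_finrank ?_).1 hinj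
    rw [Module.finrank_fintype_fun_eq_card, Module.finrank_fintype_fun_eq_card]
    exact le_antisymm hle hge
  choose g hg using fun lam : YD d => hsurj (Pi.single lam 1)
  have h1 : matX d * (Matrix.of fun σ lam => g lam (ConjClasses.mk σ)) = 1 := by
    ext lam lam'
    rw [Matrix.mul_apply]
    have := congrFun (hg lam') lam
    rw [hT] at this
    simp only [Matrix.of_apply, this, Matrix.one_apply, Pi.single_apply]
  refine ⟨Matrix.of fun σ lam => g lam (ConjClasses.mk σ), h1, ?_⟩
  set Ψ : Matrix (Equiv.Perm (Fin d)) (YD d) ℝ :=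
    Matrix.of fun σ lam => g lam (ConjClasses.mk σ) with hΨ
  have h2 : matX d * ((d.factorial : ℝ) • (Ψ * matX d) - matR d) = 0 := by
    rw [Matrix.mul_sub, Matrix.mul_smul, ← Matrix.mul_assoc, h1, Matrix.one_mul, matX_matR, sub_self]
  rw [← sub_eq_zero]
  ext σ κ
  refine congrFun (chi_inj' (fun σ => ((d.factorial : ℝ) • (Ψ * matX d) - matR d) σ κ) ?_ ?_) σ
  · intro ρ σ
    simp only [Matrix.sub_apply, Matrix.smul_apply, Matrix.mul_apply, matR_conj, hΨ,
      Matrix.of_apply, hcl]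
  · intro lam
    have := congrFun (congrFun h2 lam) κ
    rw [Matrix.mul_apply] at this
    exact this

lemma trace_formula [Fintype (YD d)] (n : ℕ) : Matrix.trace (matR d * matL d ^ n) =
    d.factorial * ∑ lam : YD d, (∑ c ∈ lam.1.cells, (content c : ℝ)) ^ n := by
  classical
  obtain ⟨Ψ, h1, h2⟩ := exists_inverse (d := d)
  choose m hm1 hm2 using fun lam : YD d => exists_coeffs lam
  let M : Matrix (YD d) (YD d) ℝ :=
    Matrix.diagonal (fun lam : YD d => ∑ c ∈ lam.1.cells, (content c : ℝ)) + Matrix.of m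
  have hXL : matX d * matL d = M * matX d := by
    ext lam ρ
    rw [Matrix.add_mul, Matrix.add_apply, Matrix.diagonal_mul, Matrix.mul_apply, Matrix.mul_apply]
    refine Eq.trans ?_ (hm2 lam ρ)
    rw [← Equiv.sum_comp ((Equiv.inv (Equiv.Perm (Fin d))).trans (Equiv.mulRight ρ))]
    refine Finset.sum_congr rfl fun τ _ => ?_
    have hτ : τ.IsSwap → τ⁻¹ = τ := by
      rintro ⟨x, y, _, rfl⟩
      exact Equiv.swap_inv x y
    by_cases h : τ.IsSwap
    · simp [matL, matX, h, hτ h]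
    · simp [matL, h]
  have hpow : ∀ n : ℕ, matX d * matL d ^ n = M ^ n * matX d := by
    intro n
    induction n with
    | zero => simp
    | succ n ih => rw [pow_succ, ← Matrix.mul_assoc, ih, Matrix.mul_assoc, hXL, ← Matrix.mul_assoc,
        pow_succ]
  have hMdiag : ∀ lam, M lam lam = ∑ c ∈ lam.1.cells, (content c : ℝ) := by
    intro lam
    have : m lam lam = 0 := by
      by_contra h
      exact lt_irrefl _ (hm1 lam lam h)
    simp [M, this]
  have htri := tri_pow M (fun lam => sq (rows lam)) (by
    intro i j hij
    by_cases h : i = j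
    · exact Or.inl h
    · right
      apply hm1
      simpa [M, h] using hij) n
  rw [← h2, Matrix.smul_mul, Matrix.trace_smul, Matrix.mul_assoc, hpow, Matrix.trace_mul_comm,
    Matrix.mul_assoc, h1, Matrix.mul_one, smul_eq_mul, Matrix.trace]
  congr 1
  refine Finset.sum_congr rfl fun lam _ => ?_
  rw [Matrix.diag_apply, htri.2, hMdiag]

lemma count_formula (n : ℕ) :
    (Nat.card
      {c : Equiv.Perm (Fin d) × Equiv.Perm (Fin d) × (Fin n → Equiv.Perm (Fin d)) //
        c.1 * c.2.1 * c.1⁻¹ * c.2.1⁻¹ * (List.ofFn c.2.2).prod = 1 ∧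
        (∀ i, (c.2.2 i).IsSwap)} : ℝ) = Matrix.trace (matR d * matL d ^ n) := by
  classical
  rw [Nat.card_eq_fintype_card, Fintype.card_subtype, Finset.card_filter]
  push_cast
  rw [Fintype.sum_prod_type]
  simp only [Fintype.sum_prod_type]
  rw [Finset.sum_comm, Matrix.trace]
  apply Finset.sum_congr rfl
  intro π₂ _
  rw [Matrix.diag_apply, Matrix.mul_apply]
  simp only [matR, Finset.sum_mul]
  symm
  rw [Finset.sum_comm]
  refine Finset.sum_congr rfl fun π₁ _ => ?_
  rw [Finset.sum_eq_single (π₁ * π₂ * π₁⁻¹)]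
  · rw [if_pos rfl, one_mul, matL_pow]
    symm
    refine Finset.sum_congr rfl fun t _ => ?_
    congr 1
    apply propext
    rw [and_comm]
    refine and_congr Iff.rfl ?_
    generalize (List.ofFn t).prod = p
    constructor
    · intro h
      have h2 : p = (π₁ * π₂ * π₁⁻¹ * π₂⁻¹)⁻¹ := (inv_eq_of_mul_eq_one_right h).symm
      rw [h2]; group
    · intro h
      have h2 : p = π₂ * (π₁ * π₂ * π₁⁻¹)⁻¹ := eq_mul_inv_of_mul_eq h
      rw [h2]; group
  · intro σ _ hσ
    rw [if_neg (fun h => hσ h.symm), zero_mul]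
  · simp

end CutJoin

/-- The number of tuples `(π₁, π₂, τ₁, …, τ_{2g−2})` of permutations of `{1,…,d}` with
`π₁π₂π₁⁻¹π₂⁻¹τ₁⋯τ_{2g−2}` the identity and each `τ_i` a transposition (no monotonicity or
transitivity constraint) equals `d! · Σ_{λ ∈ Y^d} (Σ_{□ ∈ λ} c(□))^(2g−2)`. -/
theorem card_factorizations_eq_content_power_sum (g d : ℕ) (hg : 1 ≤ g) (hd : 1 ≤ d) :
    (Nat.card
      {c : Equiv.Perm (Fin d) × Equiv.Perm (Fin d) × (Fin (2 * g - 2) → Equiv.Perm (Fin d)) //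
        c.1 * c.2.1 * c.1⁻¹ * c.2.1⁻¹ * (List.ofFn c.2.2).prod = 1 ∧
        (∀ i, (c.2.2 i).IsSwap)} : ℝ) =
      (Nat.factorial d) * ∑' lam : {lam : YoungDiagram // lam.card = d},
        (∑ c ∈ lam.1.cells, (content c : ℝ)) ^ (2 * g - 2) := by
  have : Fintype (CutJoin.YD d) := Fintype.ofFinite _
  rw [CutJoin.count_formula, CutJoin.trace_formula, tsum_fintype]
end
end
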